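/- There is no bijective quasi-isometry between the lamplighter groups G ≀ ℤ and F ≀ ℤ when |F| = n, |G| = n^k, k > 1 an integer, and k is not a product of primes dividing n. -/

import Mathlib

/-!
The proof is elementary and does not use rigidity of self-quasi-isometries of `DL(n, n)`.

A point of `F ≀ ℤ` is a finitely supported configuration together with a cursor, its height. A step up
passes one lamp and may rewrite it, so going up branches over `|F|` letters, and the box over `[s, t]`
has `(t - s + 1) * |F| ^ (t - s)` points. A bijective quasi-isometry becomes a bijection `f` of such
models, Lipschitz in both directions (`Bil`).

Let `H` be the height of the image and `U` the average over the upward neighbours. The largest mean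
increase of `H` over `L` steps is subadditive in `L` and has a limiting rate, the drift `vel f`;
reflecting the target if necessary, it may be taken nonnegative (`Bil.vel_flip`). For a point whose mean
increase is almost extremal, all siblings have nearly the same image height, and a whole cone moves at
the speed of the drift (`Bil.core`); the reason is that two paths with different first letters
diverge, so that their images cannot stay over a common short window (`Bil.sib_upper`). Hence there
are arbitrarily large boxes, of size `R`, on which `H` is affine of slope `vel f` up to a small multiple
of `R` (`Bil.linbox`).

With `|G| = n ^ k` and `|F| = n`, counting slices of such boxes and of their images gives `vel f = k`
(`Bil.vel_eq`). More careful counting shows that the deviation of `H` from slope `k` neither drops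
(`Bil.drop`) nor rises (`Bil.rise`) by more than half of its bound `m` once a collar of width `O(m)` is
removed (`Bil.halve`). Iterating, the image height is affine of slope `k` up to a fixed constant on
arbitrarily large boxes (`Bil.rigid`).

The image of such a box over an interval of length `ℓ`, with boundary layers of bounded height cut off,
is a union of full target boxes of height `j = k ℓ - O(1)`, hence of size divisible by
`(j + 1) * n ^ j` (`dvd_card`). It also has `(ℓ + O(1)) * n ^ (k ℓ)` elements. As `j + 1` is about `k ℓ`,
for `ℓ` large this forces `k * q = n ^ (e + 1)` for some `q` and `e` (`Bil.dvd_pow_card`), so that every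
prime factor of `k` divides `n`.
-/

/-- The base group of the lamplighter group: finitely supported functions ℤ → F. -/
def lampBase (F : Type*) [Group F] : Subgroup (ℤ → F) where
  carrier := {f | (Function.mulSupport f).Finite}
  one_mem' := by simp [Function.mulSupport]
  mul_mem' := by
    intro a b ha hb
    exact (ha.union hb).subset (Function.mulSupport_mul a b)
  inv_mem' := by
    intro a ha
    simpa [Function.mulSupport_inv] using ha

/-- The shift of a finitely supported function by `k`. -/
def lampShift (F : Type*) [Group F] (k : ℤ) : lampBase F ≃* lampBase F where
  toFun f := ⟨fun i => f.val (i + k), by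
    have : Function.mulSupport (fun i => f.val (i + k)) ⊆
        (fun i : ℤ => i - k) '' Function.mulSupport f.val := by
      intro i hi
      exact ⟨i + k, hi, by ring⟩
    exact (f.property.image _).subset this⟩
  invFun f := ⟨fun i => f.val (i - k), by
    have : Function.mulSupport (fun i => f.val (i - k)) ⊆
        (fun i : ℤ => i + k) '' Function.mulSupport f.val := by
      intro i hi
      exact ⟨i - k, hi, by ring⟩
    exact (f.property.image _).subset this⟩
  left_inv f := by
    ext i
    simp
  right_inv f := by
    ext i
    simp
  map_mul' f g := by
    ext i
    rfl

/-- The action of ℤ on the base by shifting coordinates. -/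
def lampAction (F : Type*) [Group F] :
    Multiplicative ℤ →* MulAut (lampBase F) where
  toFun k := lampShift F (Multiplicative.toAdd k)
  map_one' := by
    ext f i
    show f.val (i + 0) = f.val i
    simp
  map_mul' a b := by
    ext f i
    simp only [MulAut.mul_apply]
    show f.val (i + Multiplicative.toAdd (a * b)) =
      f.val (i + Multiplicative.toAdd a + Multiplicative.toAdd b)
    rw [toAdd_mul]
    ring_nf

/-- The lamplighter group `F ≀ ℤ = (⊕_{i∈ℤ} F) ⋊ ℤ`. -/
def Lamp (F : Type*) [Group F] : Type _ :=
  SemidirectProduct (lampBase F) (Multiplicative ℤ) (lampAction F)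

instance (F : Type*) [Group F] : Group (Lamp F) :=
  inferInstanceAs (Group (SemidirectProduct _ _ _))

/-- The word metric on a group `G` with respect to a generating set `S`:
the length of a shortest word in `S ∪ S⁻¹` representing `g⁻¹h`. -/
noncomputable def wordDist {G : Type*} [Group G] (S : Set G) (g h : G) : ℕ :=
  sInf {m : ℕ | ∃ l : List G, l.length = m ∧ (∀ x ∈ l, x ∈ S ∨ x⁻¹ ∈ S) ∧
    g⁻¹ * h = l.prod}

set_option autoImplicit false
set_option linter.unusedSectionVars false

/-! ### The horocyclic model -/

namespace LampQI

open Relation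

/-- A point of the horocyclic-product model of the lamplighter group: a configuration `cfg` of finite
support and a cursor `pos`, thought of as standing between the lamps `pos - 1` and `pos`. The step
from height `pos` to `pos + 1` passes the lamp `pos` and may rewrite it. Only the unit letter is
distinguished; the group structure of the lamps plays no role. -/
@[ext] structure Pt (A : Type) [One A] where
  cfg : ℤ → A
  fin : (Function.mulSupport cfg).Finite
  pos : ℤ

/-- Two lamp configurations coincide outside `[s, t)`. -/
def Agr {A : Type} (s t : ℤ) (x y : ℤ → A) : Prop := ∀ i, (i < s ∨ t ≤ i) → x i = y i

section agr
variable {A : Type}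

lemma Agr.refl (s t : ℤ) (x : ℤ → A) : Agr s t x x := fun _ _ => rfl
lemma Agr.symm {s t : ℤ} {x y : ℤ → A} (h : Agr s t x y) : Agr s t y x :=
  fun i hi => (h i hi).symm
lemma Agr.trans {s t : ℤ} {x y z : ℤ → A} (h : Agr s t x y) (h' : Agr s t y z) : Agr s t x z :=
  fun i hi => (h i hi).trans (h' i hi)
lemma Agr.mono {s t s' t' : ℤ} {x y : ℤ → A} (h : Agr s t x y) (hs : s' ≤ s) (ht : t ≤ t') :
    Agr s' t' x y := fun i hi => h i (by omega)

end agr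

section basics
variable {A : Type} [One A]

/-- `p` and `q` lie over a common window of length `r`: both cursors are in `[lo, lo + r]` and the lamps
agree outside `[lo, lo + r)`. `Near 1` consists of equality, the edges of the model and pairs of
points at the same end of one window of length one; `Near r` is comparable with distance `≤ r`. -/
def Near (r : ℤ) (p q : Pt A) : Prop :=
  ∃ lo, lo ≤ p.pos ∧ p.pos ≤ lo + r ∧ lo ≤ q.pos ∧ q.pos ≤ lo + r ∧ Agr lo (lo + r) p.cfg q.cfg

lemma Near.refl (p : Pt A) : Near 0 p p := ⟨p.pos, by simp, by simp, by simp, by simp, Agr.refl _ _ _⟩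

lemma Near.symm {r : ℤ} {p q : Pt A} (h : Near r p q) : Near r q p := by
  obtain ⟨lo, h1, h2, h3, h4, h5⟩ := h
  exact ⟨lo, h3, h4, h1, h2, h5.symm⟩

lemma Near.mono {r r' : ℤ} {p q : Pt A} (h : Near r p q) (hr : r ≤ r') : Near r' p q := by
  obtain ⟨lo, h1, h2, h3, h4, h5⟩ := h
  exact ⟨lo, h1, by omega, h3, by omega, h5.mono le_rfl (by omega)⟩

lemma Near.trans {r r' : ℤ} {p q u : Pt A} (h : Near r p q) (h' : Near r' q u) :
    Near (r + r') p u := by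
  obtain ⟨lo, h1, h2, h3, h4, h5⟩ := h
  obtain ⟨lo', h1', h2', h3', h4', h5'⟩ := h'
  refine ⟨min lo lo', by omega, by omega, by omega, by omega, ?_⟩
  exact (h5.mono (by omega) (by omega)).trans (h5'.mono (by omega) (by omega))

lemma Near.abs_le {r : ℤ} {p q : Pt A} (h : Near r p q) : |p.pos - q.pos| ≤ r := by
  obtain ⟨lo, h1, h2, h3, h4, h5⟩ := h
  rw [_root_.abs_le]; omega

/-- Overwrite the lamps of `p` in `[s, t)` by `x` and put the cursor at `u`. -/
def mix (p : Pt A) (x : ℤ → A) (s t u : ℤ) : Pt A where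
  cfg i := if s ≤ i ∧ i < t then x i else p.cfg i
  fin := by
    refine (p.fin.union (Set.finite_Ico s t)).subset ?_
    intro i hi
    by_cases h : s ≤ i ∧ i < t
    · exact Or.inr h
    · left
      simpa [Function.mem_mulSupport, h] using hi
  pos := u

/-- `τ` steps upwards from `p`, writing the letters of `x`. -/
def up (p : Pt A) (x : ℤ → A) (τ : ℕ) : Pt A := mix p x p.pos (p.pos + τ) (p.pos + τ)

/-- One step upwards from `p`, writing the letter `a`. -/
def stp (p : Pt A) (a : A) : Pt A := mix p (fun _ => a) p.pos (p.pos + 1) (p.pos + 1)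

@[simp] lemma mix_pos (p : Pt A) (x : ℤ → A) (s t u : ℤ) : (mix p x s t u).pos = u := rfl
lemma mix_cfg (p : Pt A) (x : ℤ → A) (s t u i : ℤ) :
    (mix p x s t u).cfg i = if s ≤ i ∧ i < t then x i else p.cfg i := rfl
@[simp] lemma up_pos (p : Pt A) (x : ℤ → A) (τ : ℕ) : (up p x τ).pos = p.pos + τ := rfl
lemma up_cfg (p : Pt A) (x : ℤ → A) (τ : ℕ) (i : ℤ) :
    (up p x τ).cfg i = if p.pos ≤ i ∧ i < p.pos + τ then x i else p.cfg i := rfl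
@[simp] lemma stp_pos (p : Pt A) (a : A) : (stp p a).pos = p.pos + 1 := rfl
lemma stp_cfg (p : Pt A) (a : A) (i : ℤ) :
    (stp p a).cfg i = if i = p.pos then a else p.cfg i := by
  unfold stp; rw [mix_cfg]
  by_cases h : i = p.pos
  · rw [if_pos (by omega), if_pos h]
  · rw [if_neg (by omega), if_neg h]

lemma mix_agr (p : Pt A) (x : ℤ → A) (s t u : ℤ) : Agr s t (mix p x s t u).cfg p.cfg := by
  intro i hi; rw [mix_cfg, if_neg (by omega)]

@[simp] lemma up_zero (p : Pt A) (x : ℤ → A) : up p x 0 = p := by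
  ext i
  · rw [up_cfg, if_neg (by push_cast; omega)]
  · simp

lemma up_succ (p : Pt A) (x : ℤ → A) (τ : ℕ) :
    up p x (τ + 1) = stp (up p x τ) (x (p.pos + τ)) := by
  ext i
  · rw [stp_cfg, up_cfg, up_cfg, up_pos]
    by_cases h : i = p.pos + τ
    · rw [if_pos (by push_cast; omega), if_pos h, h]
    · rw [if_neg h]
      by_cases h2 : p.pos ≤ i ∧ i < p.pos + τ
      · rw [if_pos (by push_cast; omega), if_pos h2]
      · rw [if_neg (by push_cast; omega), if_neg h2]
  · simp; ring

lemma up_succ' (p : Pt A) (x : ℤ → A) (τ : ℕ) :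
    up p x (τ + 1) = up (stp p (x p.pos)) x τ := by
  ext i
  · rw [up_cfg, up_cfg, stp_cfg, stp_pos]
    by_cases h : i = p.pos
    · rw [if_pos (by push_cast; omega), if_neg (by omega), if_pos h, h]
    · rw [if_neg h]
      by_cases h2 : p.pos + 1 ≤ i ∧ i < p.pos + 1 + τ
      · rw [if_pos (by push_cast; omega), if_pos h2]
      · rw [if_neg (by push_cast; omega), if_neg h2]
  · simp; ring

lemma up_congr (p : Pt A) (x y : ℤ → A) (τ : ℕ)
    (h : ∀ i, p.pos ≤ i → i < p.pos + τ → x i = y i) : up p x τ = up p y τ := by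
  ext i
  · rw [up_cfg, up_cfg]
    split_ifs with h1
    · exact h i h1.1 h1.2
    · rfl
  · rfl

/-- A point that differs from `p` only in the strip between the two heights is a sweep of `p`. -/
lemma eq_up {p q : Pt A} (n : ℕ) (hn : q.pos = p.pos + n) (h : Agr p.pos q.pos p.cfg q.cfg) :
    up p q.cfg n = q := by
  ext i
  · rw [up_cfg]
    split_ifs with h1
    · rfl
    · exact h i (by omega)
  · simp [hn]

lemma near_stp (p : Pt A) (a : A) : Near 1 p (stp p a) := by
  refine ⟨p.pos, by simp, by simp, by simp, by simp, ?_⟩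
  exact (mix_agr _ _ _ _ _).symm

/-- `p` and `q` have the same height and merge after `L` steps up. -/
def Mg (L : ℕ) (p q : Pt A) : Prop := p.pos = q.pos ∧ Agr p.pos (p.pos + L) p.cfg q.cfg

lemma Mg.refl (L : ℕ) (p : Pt A) : Mg L p p := ⟨rfl, Agr.refl _ _ _⟩
lemma Mg.symm {L : ℕ} {p q : Pt A} (h : Mg L p q) : Mg L q p := by
  refine ⟨h.1.symm, ?_⟩
  rw [← h.1]; exact h.2.symm
lemma Mg.trans {L : ℕ} {p q u : Pt A} (h : Mg L p q) (h' : Mg L q u) : Mg L p u := by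
  refine ⟨h.1.trans h'.1, h.2.trans ?_⟩
  rw [h.1]; exact h'.2

lemma Mg.stp {L : ℕ} {p q : Pt A} (h : Mg (L + 1) p q) (a : A) : Mg L (stp p a) (stp q a) := by
  refine ⟨by simp [h.1], ?_⟩
  intro i hi
  rw [stp_cfg, stp_cfg, ← h.1]
  split_ifs with h1
  · rfl
  · refine h.2 i ?_
    simp only [stp_pos] at hi
    push_cast; omega

lemma Mg.up {L : ℕ} {p q : Pt A} (h : Mg L p q) (x : ℤ → A) (τ : ℕ) (hτ : τ ≤ L) :
    Mg (L - τ) (up p x τ) (up q x τ) := by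
  refine ⟨by simp [h.1], ?_⟩
  intro i hi
  rw [up_cfg, up_cfg, ← h.1]
  split_ifs with h1
  · rfl
  · refine h.2 i ?_
    simp only [up_pos] at hi
    omega

lemma Mg.eq {p q : Pt A} (h : Mg 0 p q) : p = q := by
  ext i
  · exact h.2 i (by push_cast; omega)
  · exact h.1

lemma Mg.up_eq {L : ℕ} {p q : Pt A} (h : Mg L p q) (x : ℤ → A) : LampQI.up p x L = LampQI.up q x L := by
  apply Mg.eq
  have := h.up x L le_rfl
  rwa [Nat.sub_self] at this

/-- `Bx c s t` is the box of points over `[s, t]` with lamps `c` outside `[s, t)`. -/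
def Bx (c : ℤ → A) (s t : ℤ) : Set (Pt A) := {q | s ≤ q.pos ∧ q.pos ≤ t ∧ Agr s t q.cfg c}

/-- `p` and `q` are joined by a path of unit steps inside `P`. -/
def Conn (P : Pt A → Prop) : Pt A → Pt A → Prop :=
  ReflTransGen (fun u v => Near 1 u v ∧ P u ∧ P v)

lemma Conn.symm {P : Pt A → Prop} {p q : Pt A} (h : Conn P p q) : Conn P q p := by
  induction h with
  | refl => exact ReflTransGen.refl
  | tail _ h2 ih => exact ReflTransGen.head ⟨h2.1.symm, h2.2.2, h2.2.1⟩ ih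

lemma Conn.trans {P : Pt A → Prop} {p q u : Pt A} (h : Conn P p q) (h' : Conn P q u) :
    Conn P p u := ReflTransGen.trans h h'

lemma conn_up {P : Pt A → Prop} (p : Pt A) (x : ℤ → A) (n : ℕ) (h : ∀ j ≤ n, P (up p x j)) :
    Conn P p (up p x n) := by
  induction n with
  | zero => rw [up_zero]; exact ReflTransGen.refl
  | succ n ih =>
    refine ReflTransGen.tail (ih fun j hj => h j (by omega)) ⟨?_, h n (by omega), h _ le_rfl⟩
    rw [up_succ]; exact near_stp _ _

/-- A part of a sweep is connected. -/
lemma conn_up_of {P : Pt A → Prop} (p : Pt A) (x : ℤ → A) (m n : ℕ) (hmn : m ≤ n)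
    (h : ∀ j, m ≤ j → j ≤ n → P (up p x j)) :
    Conn P (up p x m) (up p x n) := by
  induction n, hmn using Nat.le_induction with
  | base => exact ReflTransGen.refl
  | succ n hn ih =>
    refine ReflTransGen.tail (ih fun j h1 hj => h j h1 (by omega))
      ⟨?_, h n (by omega) (by omega), h _ (by omega) le_rfl⟩
    rw [up_succ]; exact near_stp _ _

lemma conn_mono {P Q : Pt A → Prop} (h : ∀ u, P u → Q u) {p q : Pt A} (hc : Conn P p q) :
    Conn Q p q := by
  induction hc with
  | refl => exact ReflTransGen.refl
  | tail _ h2 ih => exact ReflTransGen.tail ih ⟨h2.1, h _ h2.2.1, h _ h2.2.2⟩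

/-- Moving the cursor to height `s ≤ p.pos` without changing lamps stays between the heights. -/
lemma conn_move {P : Pt A → Prop} (p : Pt A) (s : ℤ) (hs : s ≤ p.pos)
    (h : ∀ q : Pt A, q.cfg = p.cfg → s ≤ q.pos → q.pos ≤ p.pos → P q) :
    Conn P ⟨p.cfg, p.fin, s⟩ p := by
  obtain ⟨n, hn⟩ := Int.eq_ofNat_of_zero_le (sub_nonneg.mpr hs)
  have e : up ⟨p.cfg, p.fin, s⟩ p.cfg n = p :=
    eq_up n (by simp; omega) (Agr.refl _ _ _)
  have := conn_up (P := P) ⟨p.cfg, p.fin, s⟩ p.cfg n (by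
    intro j hj
    refine h _ ?_ (by simp) (by simp; omega)
    funext i; rw [up_cfg]; split_ifs <;> rfl)
  rwa [e] at this

/-- A box is connected: any two of its points are joined by sweeping between bottom and top. -/
lemma bx_conn {c : ℤ → A} {s t : ℤ} {p q : Pt A} (hp : p ∈ Bx c s t) (hq : q ∈ Bx c s t) :
    Conn (· ∈ Bx c s t) p q := by
  have key : ∀ u : Pt A, u ∈ Bx c s t → Conn (· ∈ Bx c s t) ⟨p.cfg, p.fin, s⟩ u := by
    intro u hu
    refine Conn.trans (q := ⟨u.cfg, u.fin, s⟩) ?_ ?_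
    · -- sweep to the top of the box and back
      obtain ⟨n, hn⟩ := Int.eq_ofNat_of_zero_le (sub_nonneg.mpr (hp.1.trans hp.2.1))
      have ha : Agr s t p.cfg u.cfg := hp.2.2.trans hu.2.2.symm
      have e : up ⟨p.cfg, p.fin, s⟩ u.cfg n = ⟨u.cfg, u.fin, t⟩ :=
        eq_up (q := ⟨u.cfg, u.fin, t⟩) n (by simp; omega) ha
      have h1 := conn_up (P := (· ∈ Bx c s t)) ⟨p.cfg, p.fin, s⟩ u.cfg n (by
        intro j hj
        refine ⟨by simp, by simp; omega, ?_⟩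
        intro i hi
        rw [up_cfg]
        split_ifs with h2
        · exact hu.2.2 i hi
        · exact hp.2.2 i hi)
      rw [e] at h1
      refine h1.trans (Conn.symm ?_)
      exact conn_move ⟨u.cfg, u.fin, t⟩ s (hp.1.trans hp.2.1)
        fun v hv h1 h2 => ⟨h1, h2, by rw [hv]; exact hu.2.2⟩
    · exact conn_move u s hu.1 fun v hv h1 h2 => ⟨h1, h2.trans hu.2.1, by rw [hv]; exact hu.2.2⟩
  exact (key p hp).symm.trans (key q hq)

lemma Near.mem_bx {r : ℤ} {p q : Pt A} (h : Near r p q) {c : ℤ → A} {s t : ℤ} (hp : p ∈ Bx c s t)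
    (h1 : s + r ≤ p.pos) (h2 : p.pos ≤ t - r) : q ∈ Bx c s t := by
  obtain ⟨lo, a1, a2, a3, a4, a5⟩ := h
  exact ⟨by omega, by omega, (a5.mono (by omega) (by omega)).symm.trans hp.2.2⟩

/-- The reflection exchanging up and down. The cursor position `i` separates the lamps `i - 1` and `i`,
so negating the cursor sends lamp `i` to lamp `-1 - i`. -/
def rf : Pt A ≃ Pt A where
  toFun p := ⟨fun i => p.cfg (-1 - i), by
    refine (p.fin.image (fun i => -1 - i)).subset ?_
    intro i hi
    exact ⟨-1 - i, hi, by simp⟩, -p.pos⟩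
  invFun p := ⟨fun i => p.cfg (-1 - i), by
    refine (p.fin.image (fun i => -1 - i)).subset ?_
    intro i hi
    exact ⟨-1 - i, hi, by simp⟩, -p.pos⟩
  left_inv p := by ext <;> simp
  right_inv p := by ext <;> simp

@[simp] lemma rf_pos (p : Pt A) : (rf p).pos = -p.pos := rfl
@[simp] lemma rf_cfg (p : Pt A) (i : ℤ) : (rf p).cfg i = p.cfg (-1 - i) := rfl
@[simp] lemma rf_symm : (rf : Pt A ≃ Pt A).symm = rf := rfl
@[simp] lemma rf_rf (p : Pt A) : rf (rf p) = p := by ext <;> simp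

lemma Near.rf {r : ℤ} {p q : Pt A} (h : Near r p q) : Near r (rf p) (rf q) := by
  obtain ⟨lo, h1, h2, h3, h4, h5⟩ := h
  refine ⟨-(lo + r), ?_, ?_, ?_, ?_, fun i hi => h5 _ (by omega)⟩ <;> simp only [rf_pos] <;> omega

end basics

section maps
variable {A B : Type} [One A] [One B]

/-- `f` moves unit steps to distance at most `C`. -/
def Lip (C : ℤ) (f : Pt A → Pt B) : Prop := ∀ p q, Near 1 p q → Near C (f p) (f q)

/-- `f` is bilipschitz with constant `C ≥ 1`. -/
structure Bil (C : ℤ) (f : Pt A ≃ Pt B) : Prop where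
  one_le : 1 ≤ C
  fwd : Lip C f
  bwd : Lip C f.symm

lemma Bil.symm {C : ℤ} {f : Pt A ≃ Pt B} (h : Bil C f) : Bil C f.symm :=
  ⟨h.one_le, h.bwd, h.fwd⟩

/-- Conjugation by the reflections. -/
def cj (f : Pt A ≃ Pt B) : Pt A ≃ Pt B := (rf.trans f).trans rf

lemma cj_apply (f : Pt A ≃ Pt B) (p : Pt A) : cj f p = rf (f (rf p)) := rfl
lemma cj_cj (f : Pt A ≃ Pt B) : cj (cj f) = f := by
  ext1 p; simp [cj_apply]

lemma Bil.conj {C : ℤ} {f : Pt A ≃ Pt B} (h : Bil C f) : Bil C (cj f) :=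
  ⟨h.one_le, fun _ _ hpq => (h.fwd _ _ hpq.rf).rf, fun _ _ hpq => (h.bwd _ _ hpq.rf).rf⟩

lemma Bil.flip {C : ℤ} {f : Pt A ≃ Pt B} (h : Bil C f) : Bil C (f.trans rf) :=
  ⟨h.one_le, fun _ _ hpq => (h.fwd _ _ hpq).rf, fun _ _ hpq => (h.bwd _ _ hpq.rf)⟩

lemma Lip.near_up {C : ℤ} {f : Pt A → Pt B} (hf : Lip C f) (p : Pt A) (x : ℤ → A) (n : ℕ) :
    Near (C * n) (f p) (f (up p x n)) := by
  induction n with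
  | zero => simpa using Near.refl _
  | succ n ih =>
    have := ih.trans (hf _ _ (near_stp (up p x n) (x (p.pos + n))))
    rw [up_succ]
    refine this.mono ?_
    push_cast; ring_nf; rfl

/-- The constant `3` counts the sweeps inside the window: down, up and down again. -/
lemma Lip.near {C : ℤ} (hC : 1 ≤ C) {f : Pt A → Pt B} (hf : Lip C f) {r : ℤ} {p q : Pt A}
    (h : Near r p q) : Near (3 * C * r) (f p) (f q) := by
  obtain ⟨lo, h1, h2, h3, h4, h5⟩ := h
  -- down to the bottom of the window, up to its top, and down again
  have sw : ∀ u v : Pt A, u.pos ≤ v.pos → v.pos ≤ u.pos + r → Agr u.pos v.pos u.cfg v.cfg →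
      Near (C * r) (f u) (f v) := by
    intro u v huv hr ha
    obtain ⟨n, hn⟩ := Int.eq_ofNat_of_zero_le (sub_nonneg.mpr huv)
    have := hf.near_up u v.cfg n
    rw [eq_up n (by omega) ha] at this
    refine this.mono ?_
    have : (n : ℤ) ≤ r := by omega
    nlinarith
  have a1 := sw ⟨p.cfg, p.fin, lo⟩ p h1 h2 (Agr.refl _ _ _)
  have a2 := sw ⟨p.cfg, p.fin, lo⟩ ⟨q.cfg, q.fin, lo + r⟩ (by simp; omega) (by simp) h5
  have a3 := sw q ⟨q.cfg, q.fin, lo + r⟩ h4 (by simp; omega) (Agr.refl _ _ _)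
  exact ((a1.symm.trans a2).trans a3.symm).mono (by ring_nf; rfl)

/-- The height of the image, as a real number. -/
def Ht (f : Pt A ≃ Pt B) (p : Pt A) : ℝ := ((f p).pos : ℝ)

lemma Ht_cj (f : Pt A ≃ Pt B) (p : Pt A) : Ht (cj f) p = - Ht f (rf p) := by
  simp [Ht, cj_apply]
lemma Ht_flip (f : Pt A ≃ Pt B) (p : Pt A) : Ht (f.trans rf) p = - Ht f p := by
  simp [Ht]

lemma Bil.Ht_le {C : ℤ} {f : Pt A ≃ Pt B} (h : Bil C f) {p q : Pt A} (hpq : Near 1 p q) :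
    |Ht f p - Ht f q| ≤ C := by
  have := (h.fwd p q hpq).abs_le
  unfold Ht
  exact_mod_cast this

lemma Bil.Ht_up {C : ℤ} {f : Pt A ≃ Pt B} (h : Bil C f) (p : Pt A) (x : ℤ → A) (n : ℕ) :
    |Ht f p - Ht f (up p x n)| ≤ C * n := by
  have := (h.fwd.near_up p x n).abs_le
  unfold Ht
  exact_mod_cast this

/-- Along a path with image heights `≥ a`, the image lamps below `a - C` do not change. -/
lemma Bil.path_ge {C : ℤ} {f : Pt A ≃ Pt B} (h : Bil C f) {P : Pt A → Prop} {a : ℝ}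
    (hP : ∀ u, P u → a ≤ Ht f u) {p q : Pt A} (hc : Conn P p q) (i : ℤ) (hi : (i : ℝ) < a - C) :
    (f p).cfg i = (f q).cfg i := by
  induction hc with
  | refl => rfl
  | @tail u v _ huv ih =>
    rw [ih]
    obtain ⟨lo, h1, h2, h3, h4, h5⟩ := h.fwd _ _ huv.1
    refine h5 i (Or.inl ?_)
    have := hP _ huv.2.1
    unfold Ht at this
    have h2' : ((f u).pos : ℝ) ≤ lo + C := by exact_mod_cast h2
    have : (i : ℝ) < lo := by linarith
    exact_mod_cast this

/-- Along a path with image heights `≤ a`, the image lamps from `a + C` on do not change. -/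
lemma Bil.path_le {C : ℤ} {f : Pt A ≃ Pt B} (h : Bil C f) {P : Pt A → Prop} {a : ℝ}
    (hP : ∀ u, P u → Ht f u ≤ a) {p q : Pt A} (hc : Conn P p q) (i : ℤ) (hi : a + C ≤ (i : ℝ)) :
    (f p).cfg i = (f q).cfg i := by
  induction hc with
  | refl => rfl
  | @tail u v _ huv ih =>
    rw [ih]
    obtain ⟨lo, h1, h2, h3, h4, h5⟩ := h.fwd _ _ huv.1
    refine h5 i (Or.inr ?_)
    have := hP _ huv.2.1
    unfold Ht at this
    have h2' : (lo : ℝ) ≤ ((f u).pos : ℝ) := by exact_mod_cast h1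
    have : (lo : ℝ) + C ≤ i := by linarith
    exact_mod_cast this

end maps

section count
variable {A : Type} [One A] [Fintype A]

open Classical in
/-- The points at height `u` whose lamps agree with those of `p` outside `[s, s + ℓ)`. -/
noncomputable def slab (p : Pt A) (s : ℤ) (ℓ : ℕ) (u : ℤ) : Finset (Pt A) :=
  Finset.univ.image fun x : Fin ℓ → A =>
    mix p (fun i => if h : 0 ≤ i - s ∧ i - s < ℓ then x ⟨(i - s).toNat, by omega⟩ else 1)
      s (s + ℓ) u

lemma mem_slab {p q : Pt A} {s : ℤ} {ℓ : ℕ} {u : ℤ} :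
    q ∈ slab p s ℓ u ↔ q.pos = u ∧ Agr s (s + ℓ) q.cfg p.cfg := by
  classical
  unfold slab
  rw [Finset.mem_image]
  constructor
  · rintro ⟨x, -, rfl⟩
    exact ⟨rfl, mix_agr _ _ _ _ _⟩
  · rintro ⟨h1, h2⟩
    refine ⟨fun j => q.cfg (s + j), Finset.mem_univ _, ?_⟩
    ext i
    · rw [mix_cfg]
      by_cases h3 : s ≤ i ∧ i < s + ℓ
      · rw [if_pos h3, dif_pos (by omega)]
        simp only
        congr 1
        omega
      · rw [if_neg h3]
        exact (h2 i (by omega)).symm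
    · simp [h1]

/-- One free letter for each lamp of the window. -/
lemma card_slab (p : Pt A) (s : ℤ) (ℓ : ℕ) (u : ℤ) :
    (slab p s ℓ u).card = Fintype.card A ^ ℓ := by
  classical
  unfold slab
  rw [Finset.card_image_of_injective]
  · simp
  · intro x y hxy
    funext j
    have := congrArg (fun q => Pt.cfg q (s + j)) hxy
    simp only [mix_cfg] at this
    have hj := j.2
    rw [if_pos (by omega), if_pos (by omega), dif_pos (by omega), dif_pos (by omega)] at this
    have e : (⟨(s + (j : ℤ) - s).toNat, by omega⟩ : Fin ℓ) = j := by
      ext; simp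
    rwa [e] at this

/-- A set of points with heights in `[a, a + m)` and lamps frozen outside `[lo, lo + w)`. -/
lemma card_le_of_agr (S : Finset (Pt A)) (a : ℤ) (m : ℕ) (lo : ℤ) (w : ℕ)
    (h1 : ∀ p ∈ S, a ≤ p.pos ∧ p.pos < a + m)
    (h2 : ∀ p ∈ S, ∀ q ∈ S, Agr lo (lo + w) p.cfg q.cfg) :
    S.card ≤ m * Fintype.card A ^ w := by
  classical
  rcases S.eq_empty_or_nonempty with rfl | ⟨p, hp⟩
  · simp
  have hsub : S ⊆ (Finset.Ico a (a + m)).biUnion fun u => slab p lo w u := by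
    intro q hq
    rw [Finset.mem_biUnion]
    exact ⟨q.pos, Finset.mem_Ico.mpr (h1 q hq), mem_slab.mpr ⟨rfl, h2 q hq p hp⟩⟩
  refine (Finset.card_le_card hsub).trans (Finset.card_biUnion_le.trans ?_)
  simp [card_slab]

end count

end LampQI

/-! ### Upward averages and the drift -/

namespace LampQI

section average
variable {A : Type} [One A] [Fintype A]

/-- Average over the `|A|` upward neighbours. -/
noncomputable def U (Ψ : Pt A → ℝ) (p : Pt A) : ℝ := (∑ a, Ψ (stp p a)) / Fintype.card A

lemma card_pos' : (0 : ℝ) < Fintype.card A := by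
  exact_mod_cast Fintype.card_pos_iff.mpr ⟨(1 : A)⟩

lemma U_mono {Ψ Φ : Pt A → ℝ} {p : Pt A} (h : ∀ a, Ψ (stp p a) ≤ Φ (stp p a)) :
    U Ψ p ≤ U Φ p := by
  unfold U
  have := card_pos' (A := A)
  gcongr with a
  exact h a

lemma U_lin (Ψ Φ : Pt A → ℝ) (α β : ℝ) (p : Pt A) :
    U (fun q => α * Ψ q + β * Φ q) p = α * U Ψ p + β * U Φ p := by
  unfold U
  rw [Finset.sum_add_distrib, ← Finset.mul_sum, ← Finset.mul_sum]
  ring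

lemma U_const (c : ℝ) (p : Pt A) : U (fun _ => c) p = c := by
  unfold U
  have := card_pos' (A := A)
  simp

lemma exists_U_le (Ψ : Pt A → ℝ) (p : Pt A) : ∃ a, U Ψ p ≤ Ψ (stp p a) := by
  by_contra! h
  have hN := card_pos' (A := A)
  have : ∑ a, Ψ (stp p a) < ∑ _a : A, U Ψ p :=
    Finset.sum_lt_sum_of_nonempty ⟨1, Finset.mem_univ _⟩ fun a _ => h a
  rw [Finset.sum_const, Finset.card_univ, nsmul_eq_mul] at this
  unfold U at this
  rw [mul_div_cancel₀ _ hN.ne'] at this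
  exact lt_irrefl _ this

lemma Uit_mono {Ψ Φ : Pt A → ℝ} (L : ℕ) : ∀ {p : Pt A},
    (∀ x, Ψ (up p x L) ≤ Φ (up p x L)) → U^[L] Ψ p ≤ U^[L] Φ p := by
  induction L with
  | zero => intro p h; simpa using h 1
  | succ L ih =>
    intro p h
    rw [Function.iterate_succ_apply', Function.iterate_succ_apply']
    refine U_mono fun a => ih fun x => ?_
    have := h (fun i => if i = p.pos then a else x i)
    rw [up_succ'] at this
    simp only [if_true] at this
    rwa [up_congr (stp p a) _ x L] at this
    intro i hi _
    simp only [stp_pos] at hi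
    rw [if_neg (by omega)]

lemma Uit_affine (Ψ : Pt A → ℝ) (α β : ℝ) (L : ℕ) (p : Pt A) :
    U^[L] (fun q => α * Ψ q + β) p = α * U^[L] Ψ p + β := by
  induction L generalizing p with
  | zero => rfl
  | succ L ih =>
    rw [Function.iterate_succ_apply', Function.iterate_succ_apply']
    have : U^[L] (fun q => α * Ψ q + β) = fun q => α * U^[L] Ψ q + β * 1 := by
      funext q; rw [ih, mul_one]
    rw [this, U_lin, U_const, mul_one]

lemma Uit_const (c : ℝ) (L : ℕ) (p : Pt A) : U^[L] (fun _ => c) p = c := by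
  have := Uit_affine (fun _ => 0) 0 c L p
  simpa using this

lemma Uit_le {Ψ : Pt A → ℝ} {L : ℕ} {p : Pt A} {M : ℝ} (h : ∀ x, Ψ (up p x L) ≤ M) :
    U^[L] Ψ p ≤ M := by
  have := Uit_mono (Φ := fun _ => M) L h
  rwa [Uit_const] at this

lemma le_Uit {Ψ : Pt A → ℝ} {L : ℕ} {p : Pt A} {M : ℝ} (h : ∀ x, M ≤ Ψ (up p x L)) :
    M ≤ U^[L] Ψ p := by
  have := Uit_mono (Ψ := fun _ => M) L h
  rwa [Uit_const] at this

/-- Points that merge after `L` steps have the same average `L` steps later. -/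
lemma Mg.Uit {L : ℕ} {p q : Pt A} (h : Mg L p q) (Ψ : Pt A → ℝ) : U^[L] Ψ p = U^[L] Ψ q := by
  induction L generalizing p q with
  | zero => rw [h.eq]
  | succ L ih =>
    rw [Function.iterate_succ_apply']
    unfold U
    congr 1
    exact Finset.sum_congr rfl fun a _ => ih (h.stp a)

/-- A space-time subsolution is nondecreasing along a suitable upward path. -/
lemma greedy (Ψ : ℕ → Pt A → ℝ) (R : ℕ) (h : ∀ τ < R, ∀ q, Ψ τ q ≤ U (Ψ (τ + 1)) q) (p : Pt A) :
    ∃ x, ∀ τ ≤ R, Ψ 0 p ≤ Ψ τ (up p x τ) := by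
  induction R with
  | zero =>
    refine ⟨1, fun τ hτ => ?_⟩
    obtain rfl : τ = 0 := by omega
    simp
  | succ R ih =>
    obtain ⟨x, hx⟩ := ih fun τ hτ => h τ (by omega)
    obtain ⟨a, ha⟩ := exists_U_le (Ψ (R + 1)) (up p x R)
    have e : ∀ τ ≤ R, up p (fun i => if i = p.pos + R then a else x i) τ = up p x τ := by
      intro τ hτ
      refine up_congr _ _ _ _ fun i hi hi' => ?_
      rw [if_neg (by omega)]
    refine ⟨fun i => if i = p.pos + R then a else x i, fun τ hτ => ?_⟩
    rcases Nat.lt_or_ge R τ with h1 | h1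
    · obtain rfl : τ = R + 1 := by omega
      rw [up_succ, e R le_rfl, if_pos rfl]
      exact (hx R le_rfl).trans ((h R (by omega) _).trans ha)
    · rw [e τ h1]; exact hx τ h1

end average

lemma le_of_linear {a b c : ℝ} (h : ∀ R : ℕ, 1 ≤ R → a * R ≤ b * R + c) : a ≤ b := by
  by_contra! hab
  obtain ⟨R, hR⟩ := exists_nat_gt (c / (a - b))
  have h1 := h (R + 1) (by omega)
  have hd : 0 < a - b := by linarith
  rw [div_lt_iff₀ hd] at hR
  push_cast at h1
  nlinarith

section drift
variable {A B : Type} [One A] [One B] [Fintype A]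

/-- The largest mean increase of the image height after `L` random upward steps. -/
noncomputable def Dr (f : Pt A ≃ Pt B) (L : ℕ) : ℝ := ⨆ p, (U^[L] (Ht f) p - Ht f p)

/-- The asymptotic drift of the image height along random upward walks. Since `Dr f` is subadditive, this
infimum is also the limit of `Dr f L / L`. -/
noncomputable def vel (f : Pt A ≃ Pt B) : ℝ := sInf ((fun n : ℕ => Dr f n / n) '' Set.Ici 1)

variable {C : ℤ} {f : Pt A ≃ Pt B}

lemma Bil.abs_Uit (h : Bil C f) (L : ℕ) (p : Pt A) : |U^[L] (Ht f) p - Ht f p| ≤ C * L := by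
  rw [abs_le]
  constructor
  · have : Ht f p - C * L ≤ U^[L] (Ht f) p := le_Uit fun x => by
      have := (abs_le.mp (h.Ht_up p x L)).2
      linarith
    linarith
  · have : U^[L] (Ht f) p ≤ Ht f p + C * L := Uit_le fun x => by
      have := (abs_le.mp (h.Ht_up p x L)).1
      linarith
    linarith

lemma Bil.bdd (h : Bil C f) (L : ℕ) :
    BddAbove (Set.range fun p => U^[L] (Ht f) p - Ht f p) :=
  ⟨C * L, by rintro _ ⟨p, rfl⟩; exact (abs_le.mp (h.abs_Uit L p)).2⟩

lemma Bil.le_Dr (h : Bil C f) (L : ℕ) (p : Pt A) : U^[L] (Ht f) p - Ht f p ≤ Dr f L :=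
  le_ciSup (h.bdd L) p

instance : Nonempty (Pt A) := ⟨⟨1, by simp, 0⟩⟩

lemma Bil.Dr_le (h : Bil C f) (L : ℕ) : Dr f L ≤ C * L :=
  ciSup_le fun p => (abs_le.mp (h.abs_Uit L p)).2

lemma Bil.subadd (h : Bil C f) : Subadditive (Dr f) := by
  intro m n
  refine ciSup_le fun p => ?_
  rw [Function.iterate_add_apply]
  have h1 : U^[m] (U^[n] (Ht f)) p ≤ U^[m] (fun q => 1 * Ht f q + Dr f n) p :=
    Uit_mono m fun x => by have := h.le_Dr n (up p x m); linarith
  rw [Uit_affine] at h1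
  have := h.le_Dr m p
  linarith

lemma Bil.bddB (h : Bil C f) : BddBelow (Set.range fun n : ℕ => Dr f n / n) := by
  refine ⟨-C, ?_⟩
  rintro _ ⟨n, rfl⟩
  have hC : (1 : ℝ) ≤ C := by exact_mod_cast h.one_le
  rcases n.eq_zero_or_pos with rfl | hn
  · simpa using h.one_le.trans' zero_le_one
  have hn' : (0 : ℝ) < n := by exact_mod_cast hn
  simp only
  rw [le_div_iff₀ hn']
  have p : Pt A := Classical.arbitrary _
  have := h.le_Dr n p
  have := (abs_le.mp (h.abs_Uit n p)).1
  linarith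

lemma Bil.lim_eq (h : Bil C f) : h.subadd.lim = vel f := by
  rw [Subadditive.lim]; rfl

lemma Bil.vel_le (h : Bil C f) : vel f ≤ C := by
  rw [← h.lim_eq]
  refine (h.subadd.lim_le_div h.bddB one_ne_zero).trans ?_
  simpa using h.Dr_le 1

/-- By subadditivity, no mean increase exceeds the drift by more than an arbitrarily small linear term
and a constant. -/
lemma Bil.vel_upper (h : Bil C f) {η : ℝ} (hη : 0 < η) :
    ∃ c : ℝ, 0 ≤ c ∧ ∀ (L : ℕ) (p : Pt A), U^[L] (Ht f) p ≤ Ht f p + (vel f + η) * L + c := by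
  have ht := h.subadd.tendsto_lim h.bddB
  rw [h.lim_eq] at ht
  obtain ⟨n0, hn0⟩ := Filter.eventually_atTop.mp (ht.eventually_lt_const (lt_add_of_pos_right _ hη))
  have hC : (1 : ℝ) ≤ C := by exact_mod_cast h.one_le
  refine ⟨(C + |vel f + η|) * n0, by positivity, fun L p => ?_⟩
  rcases Nat.lt_or_ge L (n0 + 1) with hL | hL
  · have h1 := (abs_le.mp (h.abs_Uit L p)).2
    have hL' : (L : ℝ) ≤ n0 := by exact_mod_cast Nat.lt_succ_iff.mp hL
    have h2 := neg_abs_le (vel f + η)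
    have h3 := abs_nonneg (vel f + η)
    have hL0 : (0 : ℝ) ≤ L := by positivity
    nlinarith [mul_le_mul_of_nonneg_left hL' h3, mul_le_mul_of_nonneg_right h2 hL0]
  · have h1 := hn0 L (by omega)
    have hL0 : (0 : ℝ) < L := by exact_mod_cast (by omega : 0 < L)
    rw [div_lt_iff₀ hL0] at h1
    have := h.le_Dr L p
    have : 0 ≤ (C + |vel f + η|) * n0 := by positivity
    linarith

/-- The drift is an infimum, so for each length it is attained at some point up to `1`. -/
lemma Bil.vel_lower (h : Bil C f) {R : ℕ} (hR : 1 ≤ R) :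
    ∃ p, Ht f p + vel f * R - 1 ≤ U^[R] (Ht f) p := by
  have h1 := h.subadd.lim_le_div h.bddB (n := R) (by omega)
  rw [h.lim_eq, le_div_iff₀ (by exact_mod_cast hR)] at h1
  have h2 : Dr f R - 1 < ⨆ p, (U^[R] (Ht f) p - Ht f p) := by
    change Dr f R - 1 < Dr f R; linarith
  obtain ⟨p, hp⟩ := exists_lt_of_lt_ciSup h2
  exact ⟨p, by linarith⟩

/-- Turning the target upside down makes a negative drift nonnegative. -/
lemma Bil.vel_flip (h : Bil C f) : -vel f ≤ vel (f.trans rf) := by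
  by_contra! hlt
  obtain ⟨η, hη, hη'⟩ : ∃ η > 0, vel (f.trans rf) + 2 * η < - vel f :=
    ⟨(- vel f - vel (f.trans rf)) / 4, by linarith, by linarith⟩
  obtain ⟨c, -, hc⟩ := h.vel_upper hη
  obtain ⟨c', -, hc'⟩ := h.flip.vel_upper hη
  have : -(vel f + η) ≤ vel (f.trans rf) + η := by
    refine le_of_linear (c := c + c') fun R _ => ?_
    have p : Pt A := Classical.arbitrary _
    have h1 := hc R p
    have h2 := hc' R p
    have e : Ht (f.trans rf) = fun q => (-1) * Ht f q + 0 := by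
      funext q; rw [Ht_flip]; ring
    rw [e, Uit_affine] at h2
    linarith
  linarith

end drift

/-! ### An exponential potential -/

section core
variable {A B : Type} [One A] [One B] [Fintype A]
variable {C : ℤ} {f : Pt A ≃ Pt B}

/-- An exponential potential: comparable with `exp (lam * H)` and growing under `U` at most at the
rate `lam * (v + 3 η)`. It is a discounted sum of the averages of `exp (lam * H)` over a block of steps;
for small `lam` the exponential grows over a long block like its first-order expansion. -/
lemma Bil.potential (h : Bil C f) {η : ℝ} (hη : 0 < η) (hη1 : η ≤ 1) :
    ∃ (lam cG : ℝ) (G : Pt A → ℝ), 0 < lam ∧ 0 ≤ cG ∧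
      (∀ p, Real.exp (lam * Ht f p) ≤ G p) ∧ (∀ p, G p ≤ cG * Real.exp (lam * Ht f p)) ∧
      ∀ p, U G p ≤ Real.exp (lam * (vel f + 3 * η)) * G p := by
  obtain ⟨c, hc0, hc⟩ := h.vel_upper hη
  obtain ⟨L, hL⟩ := exists_nat_ge (c / η)
  rw [div_le_iff₀ hη] at hL
  set L0 := L + 1 with hL0
  have hC : (1 : ℝ) ≤ C := by exact_mod_cast h.one_le
  have hLpos : (1 : ℝ) ≤ L0 := by rw [hL0]; push_cast; linarith [(Nat.cast_nonneg L : (0:ℝ) ≤ L)]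
  have hcL : c ≤ η * L0 := by rw [hL0]; push_cast; nlinarith
  set lam := η / (C ^ 2 * L0) with hlam
  have hlam0 : 0 < lam := by positivity
  have hlamC : lam * (C * L0) ≤ 1 := by
    rw [hlam, div_mul_eq_mul_div, div_le_one (by positivity)]
    have : 0 ≤ C * (L0 : ℝ) := by positivity
    nlinarith
  have hlam2 : lam * (C ^ 2 * L0) = η := by
    rw [hlam]; field_simp
  set E : Pt A → ℝ := fun q => Real.exp (lam * Ht f q) with hE
  set v' := vel f + 3 * η with hv'
  set ρ := Real.exp (lam * v') with hρ
  have hρ0 : 0 < ρ := Real.exp_pos _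
  -- after `L0` steps the expectation of the exponential has grown by at most `ρ ^ L0`
  have step : ∀ p, U^[L0] E p ≤ ρ ^ L0 * E p := by
    intro p
    have h1 : U^[L0] E p ≤ U^[L0] (fun q => (E p * lam) * Ht f q +
        E p * (1 - lam * Ht f p + (lam * (C * L0)) ^ 2)) p := by
      refine Uit_mono L0 fun x => ?_
      have hb := h.Ht_up p x L0
      set X := Ht f (up p x L0) - Ht f p with hX
      have hX' : |X| ≤ C * L0 := by rw [hX, abs_sub_comm]; exact hb
      have hlX : |lam * X| ≤ lam * (C * L0) := by
        rw [abs_mul, abs_of_pos hlam0]; gcongr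
      have h2 := (abs_le.mp (Real.abs_exp_sub_one_sub_id_le (hlX.trans hlamC))).2
      have h3 : (lam * X) ^ 2 ≤ (lam * (C * L0)) ^ 2 := by
        rw [← sq_abs (lam * X)]; gcongr
      have h4 : E (up p x L0) = E p * Real.exp (lam * X) := by
        simp only [hE, ← Real.exp_add]
        congr 1; rw [hX]; ring
      have hEp : 0 < E p := Real.exp_pos _
      rw [h4]
      have : Real.exp (lam * X) ≤ 1 + lam * X + (lam * (C * L0)) ^ 2 := by linarith
      calc E p * Real.exp (lam * X) ≤ E p * (1 + lam * X + (lam * (C * L0)) ^ 2) := by gcongr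
        _ = _ := by rw [hX]; ring
    rw [Uit_affine] at h1
    have h5 := hc L0 p
    have hEp : 0 < E p := Real.exp_pos _
    have h6 : U^[L0] E p ≤ E p * (1 + lam * ((vel f + η) * L0 + c) + (lam * (C * L0)) ^ 2) := by
      have : E p * lam * U^[L0] (Ht f) p ≤ E p * lam * (Ht f p + (vel f + η) * L0 + c) := by
        gcongr
      linarith
    have h7 : lam * ((vel f + η) * L0 + c) + (lam * (C * L0)) ^ 2 ≤ lam * v' * L0 := by
      have e1 : (lam * (C * L0)) ^ 2 = lam * (lam * (C ^ 2 * L0)) * L0 := by ring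
      rw [e1, hlam2, hv']
      have : lam * c ≤ lam * (η * L0) := by gcongr
      nlinarith
    have h8 : 1 + lam * ((vel f + η) * L0 + c) + (lam * (C * L0)) ^ 2 ≤ ρ ^ L0 := by
      rw [hρ, ← Real.exp_nat_mul]
      have := Real.add_one_le_exp (L0 * (lam * v'))
      linarith
    calc U^[L0] E p ≤ E p * ρ ^ L0 := h6.trans (by gcongr)
      _ = _ := by ring
  have Epos : ∀ i p, 0 ≤ U^[i] E p := fun i p => le_Uit fun x => (Real.exp_pos _).le
  have Eup : ∀ i p, U^[i] E p ≤ Real.exp (lam * C * i) * E p := by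
    intro i p
    refine Uit_le fun x => ?_
    simp only [hE, ← Real.exp_add]
    apply Real.exp_le_exp.mpr
    have := (abs_le.mp (h.Ht_up p x i)).1
    nlinarith
  set G : Pt A → ℝ := fun p => ∑ i ∈ Finset.range L0, (ρ⁻¹) ^ i * U^[i] E p with hG
  refine ⟨lam, ∑ i ∈ Finset.range L0, (ρ⁻¹) ^ i * Real.exp (lam * C * i), G, hlam0,
    by positivity, ?_, ?_, ?_⟩
  · intro p
    have := Finset.single_le_sum (f := fun i => (ρ⁻¹) ^ i * U^[i] E p) (s := Finset.range L0)
      (fun i _ => mul_nonneg (by positivity) (Epos i p)) (Finset.mem_range.mpr (by omega : 0 < L0))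
    simpa [hG, hE] using this
  · intro p
    rw [hG, Finset.sum_mul]
    refine Finset.sum_le_sum fun i _ => ?_
    rw [mul_assoc]
    have := Eup i p
    gcongr
  · intro p
    have e1 : U G p = ∑ i ∈ Finset.range L0, (ρ⁻¹) ^ i * U^[i + 1] E p := by
      have e0 : ∀ i, U^[i + 1] E p = (∑ a, U^[i] E (stp p a)) / Fintype.card A := fun i => by
        rw [Function.iterate_succ_apply']; rfl
      simp only [e0]
      change (∑ a, ∑ i ∈ Finset.range L0, (ρ⁻¹) ^ i * U^[i] E (stp p a)) / _ = _
      rw [Finset.sum_comm, Finset.sum_div]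
      refine Finset.sum_congr rfl fun i _ => ?_
      rw [← Finset.mul_sum, mul_div_assoc]
    have e2 : U G p = ρ * ∑ i ∈ Finset.range L0, (ρ⁻¹) ^ (i + 1) * U^[i + 1] E p := by
      rw [e1, Finset.mul_sum]
      refine Finset.sum_congr rfl fun i _ => ?_
      rw [pow_succ]; field_simp
    have e3 := Finset.sum_range_succ' (fun i => (ρ⁻¹) ^ i * U^[i] E p) L0
    rw [Finset.sum_range_succ] at e3
    have e4 : (ρ⁻¹) ^ L0 * U^[L0] E p ≤ E p := by
      have := step p
      rw [inv_pow, inv_mul_le_iff₀ (by positivity)]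
      exact this
    rw [e2]
    have e5 : ∑ i ∈ Finset.range L0, (ρ⁻¹) ^ (i + 1) * U^[i + 1] E p ≤ G p := by
      simp only [pow_zero, one_mul, Function.iterate_zero, id] at e3
      have : G p = ∑ i ∈ Finset.range L0, (ρ⁻¹) ^ i * U^[i] E p := rfl
      linarith
    gcongr

end core
end LampQI

/-! ### Almost extremal points -/

namespace LampQI

section core
variable {A B : Type} [One A] [One B] [Fintype A]
variable {C : ℤ} {f : Pt A ≃ Pt B}

/-- An almost extremal point `p` is the start of a path that rises at the speed of the drift, stays
almost extremal, and all of whose late siblings are not much lower than the path. The path follows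
greedily the subsolution `U^[R - τ] H - κ τ * G`, where `G` is the potential of `Bil.potential`: the
first term keeps the path extremal, and the penalty keeps it from rising faster than the drift. -/
lemma Bil.path (h : Bil C f) {η : ℝ} (hη : 0 < η) (hη1 : η ≤ 1) :
    ∃ c : ℝ, 0 ≤ c ∧ ∀ (p : Pt A) (R : ℕ) (Δ : ℝ), 0 ≤ Δ →
      Ht f p + vel f * R - Δ ≤ U^[R] (Ht f) p → ∃ x : ℤ → A, ∀ τ ≤ R,
        Ht f (up p x τ) ≤ Ht f p + vel f * τ + (Δ + 6 * η * R + c) ∧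
        (∀ w, Mg (R - τ) (up p x τ) w → Ht f p + vel f * τ - (Δ + 6 * η * R + c) ≤ Ht f w) ∧
        Ht f p + vel f * R - Δ - c ≤ U^[R - τ] (Ht f) (up p x τ) := by
  obtain ⟨c0, hc0, hc⟩ := h.vel_upper hη
  obtain ⟨lam, cG, G, hlam, hcG, hG1, hG2, hG3⟩ := h.potential hη hη1
  refine ⟨c0 + cG / lam, by positivity, fun p R Δ hΔ hp => ?_⟩
  set v := vel f with hv
  set c1 := cG / lam with hc1
  have hc10 : 0 ≤ c1 := by positivity
  set κ : ℕ → ℝ := fun τ => (1 / lam) * Real.exp (-(lam * (Ht f p + (v + 3 * η) * τ))) with hκ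
  have hκ0 : ∀ τ, 0 < κ τ := fun τ => by positivity
  obtain ⟨x, hx⟩ := greedy (fun τ q => U^[R - τ] (Ht f) q - κ τ * G q) R (by
    intro τ hτ q
    have e1 : U (fun q => U^[R - (τ + 1)] (Ht f) q - κ (τ + 1) * G q) q
        = U^[R - τ] (Ht f) q - κ (τ + 1) * U G q := by
      have e2 : (fun q => U^[R - (τ + 1)] (Ht f) q - κ (τ + 1) * G q)
          = fun q => 1 * U^[R - (τ + 1)] (Ht f) q + (- κ (τ + 1)) * G q := by
        funext q; ring
      rw [e2, U_lin, ← Function.iterate_succ_apply' U]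
      rw [show (R - (τ + 1)).succ = R - τ by omega]
      ring
    rw [e1]
    have e3 : κ (τ + 1) * Real.exp (lam * (v + 3 * η)) = κ τ := by
      simp only [hκ]
      rw [mul_assoc, ← Real.exp_add]
      congr 2; push_cast; ring
    have := mul_le_mul_of_nonneg_left (hG3 q) (hκ0 (τ + 1)).le
    rw [← mul_assoc, e3] at this
    linarith) p
  refine ⟨x, fun τ hτ => ?_⟩
  have hxτ := hx τ hτ
  simp only [Nat.sub_zero] at hxτ
  set Z := U^[R - τ] (Ht f) (up p x τ) with hZ
  have hcast : ((R - τ : ℕ) : ℝ) = R - τ := by push_cast [hτ]; ring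
  have hτR : (τ : ℝ) ≤ R := by exact_mod_cast hτ
  have hτ0 : (0 : ℝ) ≤ τ := by positivity
  have k0 : κ 0 * G p ≤ c1 := by
    calc κ 0 * G p ≤ κ 0 * (cG * Real.exp (lam * Ht f p)) :=
          mul_le_mul_of_nonneg_left (hG2 p) (hκ0 0).le
      _ = c1 * (Real.exp (-(lam * Ht f p)) * Real.exp (lam * Ht f p)) := by
          simp only [hκ, hc1]; push_cast; ring_nf
      _ = c1 := by rw [← Real.exp_add]; simp
  set D := Ht f (up p x τ) - Ht f p - (v + 3 * η) * τ with hD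
  have kτ : Real.exp (lam * D) / lam ≤ κ τ * G (up p x τ) := by
    calc Real.exp (lam * D) / lam = κ τ * Real.exp (lam * Ht f (up p x τ)) := by
          simp only [hκ]
          rw [mul_assoc, ← Real.exp_add]
          rw [div_eq_inv_mul, one_div]; congr 2; rw [hD]; ring
      _ ≤ _ := mul_le_mul_of_nonneg_left (hG1 _) (hκ0 τ).le
  have hexp : 2 * D ≤ Real.exp (lam * D) / lam := by
    rw [le_div_iff₀ hlam]
    have h1 := Real.add_one_le_exp (lam * D - 1)
    have h2 : Real.exp (lam * D) = Real.exp 1 * Real.exp (lam * D - 1) := by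
      rw [← Real.exp_add]; congr 1; ring
    have h3 := Real.add_one_le_exp (1 : ℝ)
    rcases le_or_gt D 0 with h4 | h4
    · nlinarith [Real.exp_pos (lam * D)]
    · have : 0 < lam * D := by positivity
      rw [h2]
      nlinarith [Real.exp_pos (lam * D - 1)]
  have hUZ := hc (R - τ) (up p x τ)
  rw [hcast, ← hZ] at hUZ
  have hexp0 : 0 ≤ Real.exp (lam * D) / lam := by positivity
  have hητ : η * τ ≤ η * R := by gcongr
  have hητ0 : 0 ≤ η * τ := by positivity
  have hZl : Ht f p + v * R - Δ - c1 ≤ Z := by linarith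
  refine ⟨?_, ?_, by linarith⟩
  · linarith
  · intro w hw
    have h1 := hc (R - τ) w
    rw [← hw.Uit, hcast, ← hZ] at h1
    linarith

/-- As `Bil.path`, with a prescribed first letter: each upward neighbour of an almost extremal point is
again almost extremal, as the average over all neighbours cannot exceed the drift by much. -/
lemma Bil.path_letter (h : Bil C f) (hv : 0 ≤ vel f) : ∃ K : ℝ, 0 ≤ K ∧ ∀ η : ℝ, 0 < η → η ≤ 1 →
    ∃ c : ℝ, 0 ≤ c ∧ ∀ (p : Pt A) (R : ℕ) (Δ : ℝ) (a : A), 1 ≤ R → 0 ≤ Δ →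
      Ht f p + vel f * R - Δ ≤ U^[R] (Ht f) p → ∃ x : ℤ → A, x p.pos = a ∧ ∀ τ ≤ R,
        Ht f (up p x τ) ≤ Ht f p + vel f * τ + (K * (Δ + η * R) + c) ∧
        (∀ w, Mg (R - τ) (up p x τ) w →
          Ht f p + vel f * τ - (K * (Δ + η * R) + c) ≤ Ht f w) := by
  set N : ℝ := (Fintype.card A : ℝ) with hN
  have hN1 : 1 ≤ N := by
    rw [hN]; exact_mod_cast Fintype.card_pos_iff.mpr ⟨(1 : A)⟩
  have hC : (1 : ℝ) ≤ C := by exact_mod_cast h.one_le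
  refine ⟨N + 6, by positivity, fun η hη hη1 => ?_⟩
  obtain ⟨c0, hc0, hc⟩ := h.vel_upper hη
  obtain ⟨c2, hc20, hpath⟩ := h.path hη hη1
  refine ⟨N * (c0 + 2 * C) + c2 + 2 * C, by positivity, fun p R Δ a hR hΔ hp => ?_⟩
  obtain ⟨R, rfl⟩ : ∃ r, R = r + 1 := ⟨R - 1, by omega⟩
  set v := vel f with hvdef
  have hvC : v ≤ C := h.vel_le
  have hR0 : (0 : ℝ) ≤ R := by positivity
  have hstp : ∀ b, |Ht f p - Ht f (stp p b)| ≤ C := fun b => h.Ht_le (near_stp p b)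
  have hcastR : ((R + 1 : ℕ) : ℝ) = R + 1 := by push_cast; ring
  set Δa := N * (Δ + η * (R + 1) + c0 + 2 * C) with hΔa
  have hΔa0 : 0 ≤ Δa := by positivity
  -- the other letters cannot make up for a bad letter `a`
  have hpa : Ht f (stp p a) + v * R - Δa ≤ U^[R] (Ht f) (stp p a) := by
    classical
    have e : U^[R + 1] (Ht f) p = (∑ b, U^[R] (Ht f) (stp p b)) / N := by
      rw [Function.iterate_succ_apply']; rfl
    rw [e, le_div_iff₀ (by positivity), hcastR] at hp
    rw [← Finset.add_sum_erase _ _ (Finset.mem_univ a)] at hp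
    have hsum : ∑ b ∈ Finset.univ.erase a, U^[R] (Ht f) (stp p b)
        ≤ (N - 1) * (Ht f p + C + (v + η) * R + c0) := by
      have : ∀ b ∈ Finset.univ.erase a, U^[R] (Ht f) (stp p b)
          ≤ Ht f p + C + (v + η) * R + c0 := by
        intro b _
        have h1 := hc R (stp p b)
        have h2 := (abs_le.mp (hstp b)).1
        linarith
      refine (Finset.sum_le_card_nsmul _ _ _ this).trans ?_
      rw [nsmul_eq_mul, Finset.card_erase_of_mem (Finset.mem_univ a), Finset.card_univ,
        Nat.cast_pred (Fintype.card_pos_iff.mpr ⟨a⟩)]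
    have h2 := (abs_le.mp (hstp a)).1
    have h3 : 0 ≤ (N - 1) * v := mul_nonneg (by linarith) hv
    have h4 : 0 ≤ η * R := by positivity
    nlinarith
  obtain ⟨y, hy⟩ := hpath (stp p a) R Δa hΔa0 hpa
  refine ⟨fun i => if i = p.pos then a else y i, if_pos rfl, fun τ hτ => ?_⟩
  set E := (N + 6) * (Δ + η * ((R + 1 : ℕ) : ℝ)) + (N * (c0 + 2 * C) + c2 + 2 * C) with hE
  have hEa : Δa + 6 * η * R + c2 + 2 * C ≤ E := by
    rw [hE, hΔa, hcastR]
    nlinarith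
  have h2 := abs_le.mp (hstp a)
  rcases τ with _ | τ
  · rw [up_zero]
    have hE0 : 0 ≤ E := by positivity
    refine ⟨by push_cast; linarith, fun w hw => ?_⟩
    rw [Nat.sub_zero] at hw
    have h1 := hc (R + 1) w
    rw [← hw.Uit] at h1
    rw [hcastR] at h1 hp
    have : Δ + η * (R + 1) + c0 ≤ Δa := by
      rw [hΔa]
      have : 0 ≤ Δ + η * (R + 1) + c0 + 2 * C := by positivity
      nlinarith
    have : 0 ≤ 6 * η * R := by positivity
    push_cast
    linarith
  · have e : up p (fun i => if i = p.pos then a else y i) (τ + 1) = up (stp p a) y τ := by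
      rw [up_succ']
      simp only [if_true]
      refine up_congr _ _ _ _ fun i hi _ => ?_
      simp only [stp_pos] at hi
      rw [if_neg (by omega)]
    obtain ⟨y1, y2, -⟩ := hy τ (by omega)
    rw [e]
    refine ⟨by push_cast; linarith, fun w hw => ?_⟩
    have := y2 w (by rwa [show R + 1 - (τ + 1) = R - τ by omega] at hw)
    push_cast
    linarith

/-- No sibling `q` of an almost extremal point `p` has a much larger image height. Otherwise take two
extremal paths from `p` with different first letters and stop both after `n1` steps. Downwards from `p`
they are joined below a fixed image height, and through the sweeps of `q` above another one, so the two
stopped images lie over a common short window, although `n1` steps up the two paths differ at a lamp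
`n1` below. -/
lemma Bil.sib_upper (h : Bil C f) (hv : 0 ≤ vel f) (hN : 2 ≤ Fintype.card A) :
    ∃ K : ℝ, 0 ≤ K ∧ ∀ η : ℝ, 0 < η → η ≤ 1 →
    ∃ c : ℝ, 0 ≤ c ∧ ∀ (p : Pt A) (R : ℕ) (Δ : ℝ), 0 ≤ Δ →
      Ht f p + vel f * R - Δ ≤ U^[R] (Ht f) p →
      ∀ q, Mg R p q → Ht f q ≤ Ht f p + (K * (Δ + η * R) + c) := by
  obtain ⟨K, hK0, hK⟩ := h.path_letter hv
  have hC : (1 : ℝ) ≤ C := by exact_mod_cast h.one_le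
  refine ⟨12 * C ^ 2 * K, by positivity, fun η hη hη1 => ?_⟩
  obtain ⟨c, hc0, hc⟩ := hK η hη hη1
  refine ⟨12 * C ^ 2 * c + 2 * C * (3 * C * (2 * C + 2) + 1), by positivity,
    fun p R Δ hΔ hp q hq => ?_⟩
  set v := vel f with hvdef
  set E := K * (Δ + η * R) + c with hE
  have hE0 : 0 ≤ E := by positivity
  set r : ℤ := ⌈2 * E⌉ + 2 * C + 1 with hr
  have hC' := h.one_le
  have hr0 : 0 ≤ r := by have : (0 : ℤ) ≤ ⌈2 * E⌉ := by positivity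
                         omega
  obtain ⟨n1, hn1⟩ := Int.eq_ofNat_of_zero_le (show (0 : ℤ) ≤ 3 * C * r + 1 by positivity)
  have hn1r : (n1 : ℝ) = 3 * C * r + 1 := by exact_mod_cast hn1.symm
  have hrle : (r : ℝ) ≤ 2 * E + 2 * C + 2 := by
    rw [hr]; push_cast; linarith [Int.ceil_lt_add_one (2 * E)]
  have hrge : 2 * E + 2 * C + 1 ≤ (r : ℝ) := by
    rw [hr]; push_cast; linarith [Int.le_ceil (2 * E)]
  have hgoal : ∀ y : ℝ, y ≤ Ht f p + 2 * C * n1 →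
      y ≤ Ht f p + (12 * C ^ 2 * K * (Δ + η * R) +
        (12 * C ^ 2 * c + 2 * C * (3 * C * (2 * C + 2) + 1))) := by
    intro y hy
    have e : 12 * C ^ 2 * K * (Δ + η * R) + (12 * C ^ 2 * c + 2 * C * (3 * C * (2 * C + 2) + 1))
        = 2 * C * (3 * C * (2 * E + 2 * C + 2) + 1) := by rw [hE]; ring
    rw [e]
    have : 2 * C * (n1 : ℝ) ≤ 2 * C * (3 * C * (2 * E + 2 * C + 2) + 1) := by
      rw [hn1r]; gcongr
    linarith
  apply hgoal
  rcases Nat.lt_or_ge R n1 with hRn | hRn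
  · have h1 := (abs_le.mp (h.Ht_up p 1 R)).1
    have h2 := (abs_le.mp (h.Ht_up q 1 R)).2
    rw [hq.up_eq] at h1
    have : (C : ℝ) * R ≤ C * n1 := by
      have : (R : ℝ) ≤ n1 := by exact_mod_cast hRn.le
      gcongr
    linarith
  by_contra! hbig
  have hn1pos : 1 ≤ n1 := by
    have : (0 : ℤ) ≤ 3 * C * r := by positivity
    omega
  obtain ⟨a, b, hab⟩ := Fintype.one_lt_card_iff.mp (show 1 < Fintype.card A by omega)
  obtain ⟨xa, hxa, hpa⟩ := hc p R Δ a (by omega) hΔ hp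
  obtain ⟨xb, hxb, hpb⟩ := hc p R Δ b (by omega) hΔ hp
  set lowh := Ht f p + v * n1 - E with hlow
  set highh := Ht f p + v * n1 + E with hhigh
  -- below `lowh - C` the lamps are frozen along `q → up → down → up p x n1`
  have hlowconn : ∀ x : ℤ → A, (∀ τ ≤ R,
        Ht f (up p x τ) ≤ Ht f p + v * τ + E ∧
        (∀ w, Mg (R - τ) (up p x τ) w → Ht f p + v * τ - E ≤ Ht f w)) →
      Conn (fun u => lowh ≤ Ht f u) q (up p x n1) := by
    intro x hx
    have h1 : Conn (fun u => lowh ≤ Ht f u) q (up q x R) := by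
      refine conn_up q x R fun j hj => ?_
      rcases Nat.lt_or_ge j n1 with hjn | hjn
      · have h2 := (abs_le.mp (h.Ht_up q x j)).2
        have h3 : (C : ℝ) * j ≤ C * n1 := by
          have : (j : ℝ) ≤ n1 := by exact_mod_cast hjn.le
          gcongr
        have h4 : v * n1 ≤ C * n1 := by
          have := h.vel_le
          gcongr
        linarith
      · have h2 := (hx j hj).2 (up q x j) (hq.up x j hj)
        have h3 : v * n1 ≤ v * j := by
          have : (n1 : ℝ) ≤ j := by exact_mod_cast hjn
          gcongr
        linarith
    refine h1.trans ?_
    rw [← hq.up_eq]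
    refine (conn_up_of p x n1 R hRn fun j hj hjR => ?_).symm
    have h2 := (hx j hjR).2 (up p x j) (Mg.refl _ _)
    have h3 : v * n1 ≤ v * j := by
      have : (n1 : ℝ) ≤ j := by exact_mod_cast hj
      gcongr
    linarith
  have hhighconn : ∀ x : ℤ → A, (∀ τ ≤ R,
        Ht f (up p x τ) ≤ Ht f p + v * τ + E ∧
        (∀ w, Mg (R - τ) (up p x τ) w → Ht f p + v * τ - E ≤ Ht f w)) →
      Conn (fun u => Ht f u ≤ highh) p (up p x n1) := by
    intro x hx
    refine conn_up p x n1 fun j hj => ?_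
    have h2 := (hx j (by omega)).1
    have h3 : v * j ≤ v * n1 := by
      have : (j : ℝ) ≤ n1 := by exact_mod_cast hj
      gcongr
    linarith
  have hnear : Near r (f (up p xa n1)) (f (up p xb n1)) := by
    have la := (hpa n1 hRn).2 _ (Mg.refl _ _)
    have ua := (hpa n1 hRn).1
    have lb := (hpb n1 hRn).2 _ (Mg.refl _ _)
    have ub := (hpb n1 hRn).1
    have hlo1 := Int.ceil_lt_add_one (lowh - C)
    have hlo2 := Int.le_ceil (lowh - C)
    unfold Ht at la ua lb ub
    unfold Ht at hlow hhigh
    refine ⟨⌈lowh - C⌉, ?_, ?_, ?_, ?_, ?_⟩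
    · rw [Int.ceil_le]; linarith
    · have : ((f (up p xa n1)).pos : ℝ) ≤ ⌈lowh - C⌉ + r := by linarith
      exact_mod_cast this
    · rw [Int.ceil_le]; linarith
    · have : ((f (up p xb n1)).pos : ℝ) ≤ ⌈lowh - C⌉ + r := by linarith
      exact_mod_cast this
    · rintro i (hi | hi)
      · rw [Int.lt_ceil] at hi
        exact h.path_ge (fun u hu => hu) ((hlowconn xa hpa).symm.trans (hlowconn xb hpb)) i hi
      · have hi' : (⌈lowh - C⌉ : ℝ) + r ≤ i := by exact_mod_cast hi
        refine h.path_le (a := highh) (fun u hu => hu)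
          ((hhighconn xa hpa).symm.trans (hhighconn xb hpb)) i ?_
        linarith
  have hback := h.bwd.near h.one_le hnear
  rw [Equiv.symm_apply_apply, Equiv.symm_apply_apply] at hback
  obtain ⟨lo, h1, h2, h3, h4, h5⟩ := hback
  simp only [up_pos] at h1 h2
  have h6 := h5 p.pos (Or.inl (by omega))
  rw [up_cfg, up_cfg, if_pos (by omega), if_pos (by omega), hxa, hxb] at h6
  exact hab h6

/-- The structure theorem for almost extremal points: there is a path such that the whole cone of
siblings below its end moves at linear speed. -/
lemma Bil.core (h : Bil C f) (hv : 0 ≤ vel f) (hN : 2 ≤ Fintype.card A) :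
    ∃ K : ℝ, 0 ≤ K ∧ ∀ η : ℝ, 0 < η → η ≤ 1 →
    ∃ c : ℝ, 0 ≤ c ∧ ∀ (p : Pt A) (R : ℕ) (Δ : ℝ), 0 ≤ Δ →
      Ht f p + vel f * R - Δ ≤ U^[R] (Ht f) p → ∃ x : ℤ → A, ∀ τ ≤ R,
      ∀ w, Mg (R - τ) (up p x τ) w → |Ht f w - Ht f p - vel f * τ| ≤ K * (Δ + η * R) + c := by
  obtain ⟨K, hK0, hK⟩ := h.sib_upper hv hN
  refine ⟨7 + 9 * K, by positivity, fun η hη hη1 => ?_⟩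
  obtain ⟨c, hc0, hc⟩ := hK η hη hη1
  obtain ⟨c2, hc20, hpath⟩ := h.path hη hη1
  refine ⟨c2 + 2 * K * c2 + c, by positivity, fun p R Δ hΔ hp => ?_⟩
  obtain ⟨x, hx⟩ := hpath p R Δ hΔ hp
  refine ⟨x, fun τ hτ w hw => ?_⟩
  obtain ⟨h1, h2, h3⟩ := hx τ hτ
  have h4 := h2 w hw
  set E := Δ + 6 * η * R + c2 with hE
  have hcast : ((R - τ : ℕ) : ℝ) = R - τ := by push_cast [hτ]; ring
  have hτ0 : (0 : ℝ) ≤ τ := by positivity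
  have h5 := hc (up p x τ) (R - τ) (E + Δ + c2) (by positivity) (by rw [hcast]; linarith) w hw
  rw [hcast] at h5
  have hηR : 0 ≤ η * R := by positivity
  have hητ : 0 ≤ η * τ := by positivity
  have h6 : K * (E + Δ + c2 + η * (R - τ)) ≤ K * (2 * Δ + 7 * (η * R) + 2 * c2) := by
    apply mul_le_mul_of_nonneg_left _ hK0
    rw [hE]; linarith
  have h7 : 0 ≤ K * Δ := by positivity
  have h8 : 0 ≤ K * (η * R) := by positivity
  have h9 : 0 ≤ K * c2 := by positivity
  rw [abs_le]
  constructor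
  · nlinarith
  · nlinarith

end core
end LampQI

/-! ### Nearly affine boxes and counting -/

namespace LampQI

/-- On the box, the image height is affine of slope `σ` up to an error `m`. -/
def Lin {A B : Type} [One A] [One B] (f : Pt A ≃ Pt B) (σ : ℝ) (c : ℤ → A) (s t : ℤ) (g m : ℝ) :
    Prop := ∀ q ∈ Bx c s t, |Ht f q - σ * q.pos - g| ≤ m

section linbox
variable {A B : Type} [One A] [One B] [Fintype A]
variable {C : ℤ} {f : Pt A ≃ Pt B}

/-- Going up `R` steps and down again arbitrarily leads to a sibling of the start. -/
lemma mg_rf (p : Pt A) (x y : ℤ → A) (R : ℕ) : Mg R p (rf (up (rf (up p x R)) y R)) := by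
  refine ⟨by simp, fun i hi => ?_⟩
  rw [rf_cfg, up_cfg, if_neg (by simp; omega), rf_cfg, up_cfg, if_neg (by omega)]
  congr 1; ring

/-- An extremal path of length `R` with control at both ends: all siblings of its start have nearly the
same image height, and hence, seen from the reflected end, the path is almost extremal for `cj f` with
the drift of `f`. -/
lemma Bil.ext (h : Bil C f) (hv : 0 ≤ vel f) (hN : 2 ≤ Fintype.card A) :
    ∃ K : ℝ, 0 ≤ K ∧ ∀ η : ℝ, 0 < η → η ≤ 1 → ∃ c : ℝ, 0 ≤ c ∧ ∀ R : ℕ, 1 ≤ R → ∃ p x,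
      (∀ w, Mg R p w → |Ht f w - Ht f p| ≤ K * η * R + c) ∧
      |Ht f (up p x R) - Ht f p - vel f * R| ≤ K * η * R + c ∧
      Ht (cj f) (rf (up p x R)) + vel f * R - 2 * (K * η * R + c) ≤
        U^[R] (Ht (cj f)) (rf (up p x R)) := by
  obtain ⟨K, hK0, hK⟩ := h.core hv hN
  refine ⟨K, hK0, fun η hη hη1 => ?_⟩
  obtain ⟨c, hc0, hc⟩ := hK η hη hη1
  refine ⟨K + c, by positivity, fun R hR => ?_⟩
  obtain ⟨p, hp⟩ := h.vel_lower hR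
  obtain ⟨x, hx⟩ := hc p R 1 zero_le_one hp
  have e : K * (1 + η * R) + c = K * η * R + (K + c) := by ring
  rw [e] at hx
  have hbot : ∀ w, Mg R p w → |Ht f w - Ht f p| ≤ K * η * R + (K + c) := by
    intro w hw
    have := hx 0 (by omega) w (by simpa using hw)
    simpa using this
  have htop := hx R le_rfl _ (Mg.refl _ _)
  refine ⟨p, x, hbot, htop, le_Uit fun y => ?_⟩
  rw [Ht_cj, Ht_cj, rf_rf]
  have h1 := (abs_le.mp (hbot _ (mg_rf p x y R))).2
  have h2 := (abs_le.mp htop).1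
  linarith

/-- By `Bil.ext`, reflecting source and target does not decrease the drift. -/
lemma Bil.vel_cj_ge (h : Bil C f) (hv : 0 ≤ vel f) (hN : 2 ≤ Fintype.card A) :
    vel f ≤ vel (cj f) := by
  obtain ⟨K, hK0, hK⟩ := h.ext hv hN
  by_contra! hlt
  obtain ⟨η, hη, hη1, hη2⟩ : ∃ η : ℝ, 0 < η ∧ η ≤ 1 ∧ vel (cj f) + (2 * K + 1) * η < vel f := by
    refine ⟨min 1 ((vel f - vel (cj f)) / (2 * (2 * K + 1))), ?_, min_le_left _ _, ?_⟩
    · refine lt_min one_pos (div_pos (by linarith) (by positivity))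
    · have h1 : min 1 ((vel f - vel (cj f)) / (2 * (2 * K + 1))) ≤ _ := min_le_right _ _
      rw [le_div_iff₀ (by positivity)] at h1
      linarith
  obtain ⟨c, -, hc⟩ := hK η hη hη1
  obtain ⟨c', -, hc'⟩ := h.conj.vel_upper hη
  have : vel f - 2 * K * η ≤ vel (cj f) + η := by
    refine le_of_linear (c := 2 * c + c') fun R hR => ?_
    obtain ⟨p, x, -, -, h1⟩ := hc R hR
    have h2 := hc' R (rf (up p x R))
    linarith
  linarith

lemma Bil.vel_cj (h : Bil C f) (hv : 0 ≤ vel f) (hN : 2 ≤ Fintype.card A) :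
    vel (cj f) = vel f := by
  have h1 := h.vel_cj_ge hv hN
  have h2 := h.conj.vel_cj_ge (hv.trans h1) hN
  rw [cj_cj] at h2
  exact le_antisymm h2 h1

/-- There are arbitrarily large boxes on which the image height is nearly affine. The bottoms of the box
are controlled by `Bil.ext` and the tops by `Bil.core` for `cj f`; a point in between is bounded below
and above through its averages over the tops and over the bottoms. -/
lemma Bil.linbox (h : Bil C f) (hv : 0 ≤ vel f) (hN : 2 ≤ Fintype.card A) :
    ∃ K : ℝ, 0 ≤ K ∧ ∀ η : ℝ, 0 < η → η ≤ 1 → ∃ c : ℝ, 0 ≤ c ∧ ∀ R : ℕ, 1 ≤ R → ∃ p : Pt A,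
      Lin f (vel f) p.cfg p.pos (p.pos + R) (Ht f p - vel f * p.pos) (K * η * R + c) := by
  obtain ⟨K, hK0, hK⟩ := h.ext hv hN
  have hvc := h.vel_cj hv hN
  obtain ⟨K', hK0', hK'⟩ := h.conj.core (by rw [hvc]; exact hv) hN
  refine ⟨K + 1 + (K' * (2 * K + 1) + K), by positivity, fun η hη hη1 => ?_⟩
  obtain ⟨c, hc0, hc⟩ := hK η hη hη1
  obtain ⟨c', hc0', hc'⟩ := hK' η hη hη1
  obtain ⟨c1, hc10, hc1⟩ := h.vel_upper hη
  obtain ⟨c2, hc20, hc2⟩ := h.conj.vel_upper hη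
  refine ⟨c + c1 + c2 + (K' * (2 * c) + c' + c), by positivity, fun R hR => ?_⟩
  obtain ⟨p, x, hbot, htop, hd⟩ := hc R hR
  refine ⟨p, ?_⟩
  set v := vel f with hvdef
  set E := K * η * R + c with hE
  have hE0 : 0 ≤ E := by positivity
  obtain ⟨y, hy⟩ := hc' (rf (up p x R)) R (2 * E) (by positivity) (by rw [hvc]; exact hd)
  set T := up p x R with hT
  -- all the tops of the box
  have htops : ∀ w : Pt A, w.pos = p.pos + R → Agr p.pos (p.pos + R) w.cfg p.cfg →
      |Ht f w - Ht f T| ≤ K' * (2 * E + η * R) + c' := by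
    intro w hw1 hw2
    have := hy 0 (by omega) (rf w) ⟨by simp [hw1, hT], fun i hi => ?_⟩
    · rw [Ht_cj, Ht_cj, rf_rf, rf_rf] at this
      rw [← abs_neg]
      have e : -(Ht f w - Ht f T) = -Ht f w - -Ht f T - vel (cj f) * ((0 : ℕ) : ℝ) := by
        push_cast; ring
      rw [e]; exact this
    · simp only [up_zero, rf_pos, hT, up_pos] at hi
      push_cast at hi
      simp only [up_zero, rf_cfg]
      rw [hw2 _ (by omega), hT, up_cfg, if_neg (by omega)]
  set E' := K' * (2 * E + η * R) + c' with hE'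
  have hE'0 : 0 ≤ E' := by positivity
  have hηR : 0 ≤ η * R := by positivity
  have hfin : (K + 1 + (K' * (2 * K + 1) + K)) * η * R + (c + c1 + c2 + (K' * (2 * c) + c' + c))
      = E + η * R + c1 + c2 + (E' + E) := by rw [hE', hE]; ring
  rw [hfin]
  intro q hq
  obtain ⟨n1, hn1⟩ := Int.eq_ofNat_of_zero_le (sub_nonneg.mpr hq.1)
  obtain ⟨n2, hn2⟩ := Int.eq_ofNat_of_zero_le (sub_nonneg.mpr hq.2.1)
  have hn1r : (q.pos : ℝ) = p.pos + n1 := by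
    have : q.pos = p.pos + n1 := by omega
    exact_mod_cast this
  have hn12 : (n1 : ℝ) + n2 = R := by
    have : n1 + n2 = R := by omega
    exact_mod_cast this
  have hn10 : (0 : ℝ) ≤ n1 := by positivity
  have hn20 : (0 : ℝ) ≤ n2 := by positivity
  have hT1 := abs_le.mp htop
  have hup : Ht f p + v * R - E - E' ≤ U^[n2] (Ht f) q := le_Uit fun z => by
    have := (abs_le.mp (htops (up q z n2) (by simp; omega) (fun i hi => by
      rw [up_cfg, if_neg (by omega)]; exact hq.2.2 i hi))).1
    linarith
  have hdown : -Ht f p - E ≤ U^[n1] (Ht (cj f)) (rf q) := le_Uit fun z => by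
    rw [Ht_cj]
    have := (abs_le.mp (hbot (rf (up (rf q) z n1)) ⟨by simp; omega, fun i hi => by
      rw [rf_cfg, up_cfg, if_neg (by simp; omega), rf_cfg]
      rw [show -1 - (-1 - i) = i by ring]
      exact (hq.2.2 i hi).symm⟩)).2
    linarith
  have hup' := hc1 n2 q
  have hdown' := hc2 n1 (rf q)
  rw [Ht_cj, rf_rf, hvc] at hdown'
  rw [hn1r]
  have h1 : η * n1 ≤ η * R := by rw [← hn12]; nlinarith
  have h2 : η * n2 ≤ η * R := by rw [← hn12]; nlinarith
  rw [abs_le]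
  have hvR : v * R = v * n1 + v * n2 := by rw [← hn12]; ring
  have e1 : (v + η) * n2 = v * n2 + η * n2 := by ring
  have e2 : (v + η) * n1 = v * n1 + η * n1 := by ring
  rw [e1] at hup'
  rw [e2] at hdown'
  constructor <;> linarith

end linbox

section counting
variable {A B : Type} [One A] [One B] [Fintype A] [Fintype B]
variable {C : ℤ} {f : Pt A ≃ Pt B}

/-- A crude logarithm of a counting inequality; the factor `2` bounds `1 / log n`. -/
lemma exp_count {n X W M : ℕ} (hn : 2 ≤ n) (h : n ^ X ≤ M * n ^ W) :
    (X : ℝ) ≤ W + 2 * Real.log M := by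
  have hM : 0 ≤ Real.log M := Real.log_natCast_nonneg M
  have hn' : (2 : ℝ) ≤ n := by exact_mod_cast hn
  have hlog : 1 / 2 ≤ Real.log n := by
    have := Real.log_two_gt_d9
    have := Real.log_le_log two_pos hn'
    linarith
  have hM0 : M ≠ 0 := by
    rintro rfl
    have : 0 < n ^ X := by positivity
    omega
  have h' : ((n : ℝ)) ^ X ≤ M * (n : ℝ) ^ W := by exact_mod_cast h
  have h2 := Real.log_le_log (by positivity) h'
  rw [Real.log_mul (by exact_mod_cast hM0) (by positivity), Real.log_pow, Real.log_pow] at h2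
  by_contra! hlt
  nlinarith

lemma log_small {ε : ℝ} (hε : 0 < ε) : ∃ c : ℝ, 0 ≤ c ∧ ∀ y : ℝ, 0 ≤ y →
    2 * Real.log y ≤ ε * y + c := by
  refine ⟨2 * |Real.log (ε / 2)|, by positivity, fun y hy => ?_⟩
  rcases hy.eq_or_lt with rfl | hy
  · simp
  have h1 := Real.log_le_sub_one_of_pos (show 0 < y * (ε / 2) by positivity)
  rw [Real.log_mul hy.ne' (by positivity)] at h1
  have := neg_abs_le (Real.log (ε / 2))
  linarith

/-- If the images of the `|A| ^ ℓ` points of a slab have heights in an interval of length `y` and differ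
only over the window `[α, β]`, then, counted with `|A| = |B| ^ k`, the window has length about `k * ℓ`
at least. -/
lemma inj_count {k : ℕ} (f : Pt A ≃ Pt B) (hB : 2 ≤ Fintype.card B)
    (hAB : Fintype.card A = Fintype.card B ^ k)
    (p : Pt A) (s : ℤ) (ℓ : ℕ) (u : ℤ) (x y α β : ℝ) (hy : 0 ≤ y) (hαβ : α ≤ β)
    (h1 : ∀ v ∈ slab p s ℓ u, x ≤ Ht f v ∧ Ht f v ≤ x + y)
    (h2 : ∀ v ∈ slab p s ℓ u, ∀ v' ∈ slab p s ℓ u, ∀ i : ℤ, ((i : ℝ) < α ∨ β ≤ i) →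
      (f v).cfg i = (f v').cfg i) :
    (k : ℝ) * ℓ ≤ β - α + 2 + 2 * Real.log (y + 1) := by
  classical
  obtain ⟨w, hw⟩ := Int.eq_ofNat_of_zero_le
    (sub_nonneg.mpr ((Int.floor_le_ceil α).trans (Int.ceil_le_ceil hαβ)))
  have hw' : (w : ℝ) ≤ β - α + 2 := by
    have : (w : ℝ) = ⌈β⌉ - ⌊α⌋ := by exact_mod_cast hw.symm
    rw [this]
    linarith [Int.ceil_lt_add_one β, Int.lt_floor_add_one α]
  have hc := card_le_of_agr ((slab p s ℓ u).image f) ⌈x⌉ (⌊y⌋₊ + 1) ⌊α⌋ w (by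
      intro q hq
      obtain ⟨v, hv, rfl⟩ := Finset.mem_image.mp hq
      obtain ⟨a1, a2⟩ := h1 v hv
      unfold Ht at a1 a2
      refine ⟨Int.ceil_le.mpr a1, ?_⟩
      have h3 : ((f v).pos : ℝ) < ⌈x⌉ + (⌊y⌋₊ + 1) := by
        linarith [Int.le_ceil x, Nat.lt_floor_add_one y]
      exact_mod_cast h3) (by
      intro q hq q' hq' i hi
      obtain ⟨v, hv, rfl⟩ := Finset.mem_image.mp hq
      obtain ⟨v', hv', rfl⟩ := Finset.mem_image.mp hq'
      refine h2 v hv v' hv' i ?_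
      rcases hi with hi | hi
      · left
        have h3 : (i : ℝ) < ⌊α⌋ := by exact_mod_cast hi
        exact h3.trans_le (Int.floor_le α)
      · right
        have h3 : ⌈β⌉ ≤ i := by omega
        exact Int.ceil_le.mp h3)
  rw [Finset.card_image_of_injective _ f.injective, card_slab, hAB, ← pow_mul] at hc
  have h3 := exp_count hB hc
  have h4 : Real.log ((⌊y⌋₊ + 1 : ℕ) : ℝ) ≤ Real.log (y + 1) := by
    apply Real.log_le_log (by positivity)
    push_cast
    linarith [Nat.floor_le hy]
  push_cast at h3 h4
  linarith

/-- A target box all of whose preimages stay away from the boundary is covered by the image. -/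
lemma Bil.surj (h : Bil C f) {b : Set (Pt A)} {J1 J2 : ℤ}
    (hcl : ∀ q ∈ b, J1 ≤ (f q).pos → (f q).pos ≤ J2 → ∀ q', Near C q q' → q' ∈ b)
    {w0 w : Pt B} (hw0 : f.symm w0 ∈ b) (h1 : J1 ≤ w0.pos) (h2 : w0.pos ≤ J2)
    (hw : w ∈ Bx w0.cfg J1 J2) : f.symm w ∈ b := by
  have hc := bx_conn (p := w0) (q := w) ⟨h1, h2, Agr.refl _ _ _⟩ hw
  clear hw
  induction hc with
  | refl => exact hw0
  | @tail u u' _ huu ih =>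
    refine hcl _ ih ?_ ?_ _ (h.bwd _ _ huu.1)
    · rw [Equiv.apply_symm_apply]; exact huu.2.1.1
    · rw [Equiv.apply_symm_apply]; exact huu.2.1.2.1

/-- Box points of intermediate image height are far from the top and the bottom of the box. -/
lemma bx_closed {p : Pt A} {s t J1 J2 : ℤ}
    (hlow : ∀ v ∈ Bx p.cfg s t, v.pos < s + C → Ht f v < J1)
    (hhigh : ∀ v ∈ Bx p.cfg s t, t - C < v.pos → J2 < Ht f v) :
    ∀ q ∈ Bx p.cfg s t, J1 ≤ (f q).pos → (f q).pos ≤ J2 →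
      ∀ q', Near C q q' → q' ∈ Bx p.cfg s t := by
  intro q hq h1 h2 q' hqq
  refine hqq.mem_bx hq ?_ ?_
  · by_contra! hlt
    have := hlow q hq hlt
    unfold Ht at this
    have : (f q).pos < J1 := by exact_mod_cast this
    omega
  · by_contra! hlt
    have := hhigh q hq hlt
    unfold Ht at this
    have : J2 < (f q).pos := by exact_mod_cast this
    omega

/-- Discrete intermediate values in a box. -/
lemma Bil.exists_mid (h : Bil C f) {p : Pt A} {s t J1 J2 : ℤ} (hst : s ≤ t) (hJ : J1 + C ≤ J2)
    (hlow : ∀ v ∈ Bx p.cfg s t, v.pos < s + C → Ht f v < J1)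
    (hhigh : ∀ v ∈ Bx p.cfg s t, t - C < v.pos → J2 < Ht f v) :
    ∃ v ∈ Bx p.cfg s t, J1 ≤ (f v).pos ∧ (f v).pos ≤ J2 := by
  classical
  obtain ⟨n, hn⟩ := Int.eq_ofNat_of_zero_le (sub_nonneg.mpr hst)
  have hC := h.one_le
  set p0 : Pt A := ⟨p.cfg, p.fin, s⟩ with hp0
  have hmem : ∀ j ≤ n, up p0 p.cfg j ∈ Bx p.cfg s t := by
    intro j hj
    refine ⟨by simp [hp0], by simp [hp0]; omega, fun i hi => ?_⟩
    rw [up_cfg]; split_ifs <;> rfl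
  have hex : ∃ j, J1 ≤ (f (up p0 p.cfg j)).pos := by
    refine ⟨n, ?_⟩
    have h1 := hhigh _ (hmem n le_rfl) (by simp [hp0]; omega)
    unfold Ht at h1
    have : J2 < (f (up p0 p.cfg n)).pos := by exact_mod_cast h1
    omega
  have hn' : Nat.find hex ≤ n := Nat.find_min' hex (by
    have h1 := hhigh _ (hmem n le_rfl) (by simp [hp0]; omega)
    unfold Ht at h1
    have : J2 < (f (up p0 p.cfg n)).pos := by exact_mod_cast h1
    omega)
  have hspec := Nat.find_spec hex
  rcases hfind : Nat.find hex with _ | j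
  · rw [hfind, up_zero] at hspec
    have h1 := hlow p0 (by simpa using hmem 0 (by omega)) (by simp [hp0]; omega)
    unfold Ht at h1
    have : (f p0).pos < J1 := by exact_mod_cast h1
    omega
  · refine ⟨up p0 p.cfg (j + 1), hmem _ (by omega), by rw [← hfind]; exact hspec, ?_⟩
    have h1 := Nat.find_min hex (m := j) (by omega)
    have h2 := (h.fwd _ _ (near_stp (up p0 p.cfg j) (p.cfg (p0.pos + j)))).abs_le
    rw [← up_succ, abs_le] at h2
    omega

/-- If the image of a box over `[s, t]` covers a target box over `[J1, J2]`, then counting the preimages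
of a horizontal slice of the target box, which lie in `2 m + 1` levels at most, bounds its height. -/
lemma Bil.surj_count (h : Bil C f) {k : ℕ} (hB : 2 ≤ Fintype.card B)
    (hAB : Fintype.card A = Fintype.card B ^ k) {p : Pt A} {s t J1 J2 : ℤ} (hst : s ≤ t)
    (hJ : J1 + C ≤ J2) {σ g m : ℝ} (hσ : 1 ≤ σ) (hm : 0 ≤ m) (hlin : Lin f σ p.cfg s t g m)
    (hlow : ∀ v ∈ Bx p.cfg s t, v.pos < s + C → Ht f v < J1)
    (hhigh : ∀ v ∈ Bx p.cfg s t, t - C < v.pos → J2 < Ht f v) :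
    (J2 : ℝ) - J1 ≤ k * (t - s) + 2 * Real.log (2 * m + 1) := by
  classical
  obtain ⟨v0, hv0, h1, h2⟩ := h.exists_mid hst hJ hlow hhigh
  have hC := h.one_le
  obtain ⟨n, hn⟩ := Int.eq_ofNat_of_zero_le (sub_nonneg.mpr hst)
  obtain ⟨j, hj⟩ := Int.eq_ofNat_of_zero_le (show 0 ≤ J2 - J1 by omega)
  have hmem : ∀ w ∈ slab (f v0) J1 j J1, f.symm w ∈ Bx p.cfg s t := by
    intro w hw
    rw [mem_slab] at hw
    refine h.surj (bx_closed hlow hhigh) (w0 := f v0) (by simpa using hv0) h1 h2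
      ⟨by omega, by omega, ?_⟩
    rw [show J2 = J1 + j by omega]; exact hw.2
  set x := (J1 - m - g) / σ with hx
  have hσ0 : 0 < σ := by linarith
  have hc := card_le_of_agr ((slab (f v0) J1 j J1).image f.symm) ⌈x⌉ (⌊2 * m⌋₊ + 1) s n (by
      intro q hq
      obtain ⟨w, hw, rfl⟩ := Finset.mem_image.mp hq
      have a1 := abs_le.mp (hlin _ (hmem w hw))
      have a2 : Ht f (f.symm w) = J1 := by
        unfold Ht
        rw [Equiv.apply_symm_apply, (mem_slab.mp hw).1]
      rw [a2] at a1
      set u := (f.symm w).pos with hu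
      have hux : x ≤ u := by rw [hx, div_le_iff₀ hσ0]; linarith
      refine ⟨Int.ceil_le.mpr hux, ?_⟩
      have h3 : (u : ℝ) < ⌈x⌉ + (⌊2 * m⌋₊ + 1) := by
        have h4 : σ * x = J1 - m - g := by rw [hx]; field_simp
        have h5 : σ * (u - x) ≤ 2 * m := by rw [mul_sub, h4]; linarith
        have h6 : u - x ≤ 2 * m := by nlinarith
        linarith [Int.le_ceil x, Nat.lt_floor_add_one (2 * m)]
      exact_mod_cast h3) (by
      intro q hq q' hq'
      obtain ⟨w, hw, rfl⟩ := Finset.mem_image.mp hq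
      obtain ⟨w', hw', rfl⟩ := Finset.mem_image.mp hq'
      rw [show s + n = t by omega]
      exact (hmem w hw).2.2.trans (hmem w' hw').2.2.symm)
  rw [Finset.card_image_of_injective _ f.symm.injective, card_slab, hAB, ← pow_mul] at hc
  have h3 := exp_count hB hc
  have h4 : Real.log ((⌊2 * m⌋₊ + 1 : ℕ) : ℝ) ≤ Real.log (2 * m + 1) := by
    apply Real.log_le_log (by positivity)
    push_cast
    linarith [Nat.floor_le (show 0 ≤ 2 * m by positivity)]
  have h5 : (j : ℝ) = J2 - J1 := by exact_mod_cast hj.symm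
  have h6 : (n : ℝ) = t - s := by exact_mod_cast hn.symm
  push_cast at h3 h4
  rw [← h5, ← h6]
  linarith

end counting
end LampQI

/-! ### The drift is the ratio of the growth exponents -/

namespace LampQI

section slope
variable {A B : Type} [One A] [One B] [Fintype A] [Fintype B]
variable {C : ℤ} {f : Pt A ≃ Pt B}

/-- The image of a bottom slice of a nearly affine box lies over a window of length about `vel f * R`, so
`inj_count` bounds the drift below. -/
lemma Bil.vel_ge_card (h : Bil C f) {k : ℕ} (hB : 2 ≤ Fintype.card B)
    (hAB : Fintype.card A = Fintype.card B ^ k) (hk : 1 ≤ k) (hv : 0 ≤ vel f) :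
    (k : ℝ) ≤ vel f := by
  have hN : 2 ≤ Fintype.card A := by
    rw [hAB]; exact hB.trans (Nat.le_self_pow (by omega) _)
  obtain ⟨K, hK0, hK⟩ := h.linbox hv hN
  by_contra! hlt
  obtain ⟨η, hη, hη1, hη2⟩ : ∃ η : ℝ, 0 < η ∧ η ≤ 1 ∧ vel f + (4 * K + 1) * η < k := by
    refine ⟨min 1 ((k - vel f) / (2 * (4 * K + 1))), ?_, min_le_left _ _, ?_⟩
    · refine lt_min one_pos (div_pos (by linarith) (by positivity))
    · have h1 : min 1 ((k - vel f) / (2 * (4 * K + 1))) ≤ _ := min_le_right _ _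
      rw [le_div_iff₀ (by positivity)] at h1
      linarith
  obtain ⟨c, hc0, hc⟩ := hK η hη hη1
  obtain ⟨c', -, hlog⟩ := log_small one_pos
  have hC : (1 : ℝ) ≤ C := by exact_mod_cast h.one_le
  have : (k : ℝ) ≤ vel f + 4 * K * η := by
    refine le_of_linear (c := 4 * c + 2 * C + 3 + c') fun R hR => ?_
    obtain ⟨p, hp⟩ := hc R hR
    set E := K * η * R + c with hE
    have hE0 : 0 ≤ E := by positivity
    have hvR : 0 ≤ vel f * R := by positivity
    have hbox : ∀ q ∈ Bx p.cfg p.pos (p.pos + R),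
        Ht f p - E ≤ Ht f q ∧ Ht f q ≤ Ht f p + vel f * R + E := by
      intro q hq
      have h1 := abs_le.mp (hp q hq)
      have h2 : (p.pos : ℝ) ≤ q.pos := by exact_mod_cast hq.1
      have h3 : (q.pos : ℝ) ≤ p.pos + R := by exact_mod_cast hq.2.1
      constructor <;> nlinarith
    have hmem : ∀ q ∈ slab p p.pos R p.pos, q ∈ Bx p.cfg p.pos (p.pos + R) := by
      intro q hq
      rw [mem_slab] at hq
      exact ⟨by omega, by omega, hq.2⟩
    have := inj_count f hB hAB p p.pos R p.pos (Ht f p - E) (2 * E) (Ht f p - E - C)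
      (Ht f p + vel f * R + E + C) (by positivity) (by linarith) (by
        intro q hq
        have h1 := abs_le.mp (hp q (hmem q hq))
        rw [(mem_slab.mp hq).1] at h1
        constructor <;> linarith) (by
        intro q hq q' hq' i hi
        have hcn := bx_conn (hmem q hq) (hmem q' hq')
        rcases hi with hi | hi
        · exact h.path_ge (fun u hu => (hbox u hu).1) hcn i hi
        · exact h.path_le (fun u hu => (hbox u hu).2) hcn i hi)
    have h2 := hlog (2 * E + 1) (by positivity)
    have e : (vel f + 4 * K * η) * R + (4 * c + 2 * C + 3 + c') =
      vel f * R + 4 * E + 2 * C + 3 + c' := by rw [hE]; ring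
    rw [e]
    linarith
  linarith

/-- The image of a nearly affine box covers a target box of height about `vel f * R`, so
`Bil.surj_count` bounds the drift above. -/
lemma Bil.vel_le_card (h : Bil C f) {k : ℕ} (hB : 2 ≤ Fintype.card B)
    (hAB : Fintype.card A = Fintype.card B ^ k) (hk : 1 ≤ k) (hv : 1 ≤ vel f) :
    vel f ≤ k := by
  have hN : 2 ≤ Fintype.card A := by
    rw [hAB]; exact hB.trans (Nat.le_self_pow (by omega) _)
  obtain ⟨K, hK0, hK⟩ := h.linbox (by linarith) hN
  by_contra! hlt
  obtain ⟨η, hη, hη1, hη2⟩ : ∃ η : ℝ, 0 < η ∧ η ≤ 1 ∧ k + (4 * K + 1) * η < vel f := by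
    refine ⟨min 1 ((vel f - k) / (2 * (4 * K + 1))), ?_, min_le_left _ _, ?_⟩
    · refine lt_min one_pos (div_pos (by linarith) (by positivity))
    · have h1 : min 1 ((vel f - k) / (2 * (4 * K + 1))) ≤ _ := min_le_right _ _
      rw [le_div_iff₀ (by positivity)] at h1
      linarith
  obtain ⟨c, hc0, hc⟩ := hK η hη hη1
  obtain ⟨c', hc'0, hlog⟩ := log_small one_pos
  have hC : (1 : ℝ) ≤ C := by exact_mod_cast h.one_le
  have : vel f ≤ k + 4 * K * η := by
    refine le_of_linear (c := 4 * c + 2 * vel f * C + C + 5 + c') fun R hR => ?_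
    obtain ⟨p, hp⟩ := hc R hR
    set E := K * η * R + c with hE
    have hE0 : 0 ≤ E := by positivity
    have e : (k + 4 * K * η) * R + (4 * c + 2 * vel f * C + C + 5 + c') =
      k * R + 4 * E + 2 * vel f * C + C + 5 + c' := by rw [hE]; ring
    rw [e]
    set J1 := ⌈Ht f p + vel f * C + E⌉ + 1 with hJ1
    set J2 := ⌊Ht f p + vel f * (R - C) - E⌋ - 1 with hJ2
    have a1 : (J1 : ℝ) < Ht f p + vel f * C + E + 2 := by
      rw [hJ1]; push_cast; linarith [Int.ceil_lt_add_one (Ht f p + vel f * C + E)]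
    have a2 : Ht f p + vel f * (R - C) - E - 2 < J2 := by
      rw [hJ2]; push_cast; linarith [Int.lt_floor_add_one (Ht f p + vel f * (R - C) - E)]
    have a3 : Ht f p + vel f * C + E + 1 ≤ J1 := by
      rw [hJ1]; push_cast; linarith [Int.le_ceil (Ht f p + vel f * C + E)]
    have a4 : J2 ≤ Ht f p + vel f * (R - C) - E - 1 := by
      rw [hJ2]; push_cast; linarith [Int.floor_le (Ht f p + vel f * (R - C) - E)]
    have hkR : (0 : ℝ) ≤ k * R := by positivity
    have hd : vel f * (R - C) = vel f * R - vel f * C := by ring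
    rw [hd] at a2 a4
    by_cases hJ : J1 + C ≤ J2
    · have := h.surj_count hB hAB (p := p) (s := p.pos) (t := p.pos + R) (by omega) hJ hv hE0 hp
        (by
          intro q hq hqs
          have h1 := abs_le.mp (hp q hq)
          have h3 : (q.pos : ℝ) < p.pos + C := by exact_mod_cast hqs
          nlinarith) (by
          intro q hq hqs
          have h1 := abs_le.mp (hp q hq)
          have h3 : (p.pos : ℝ) + R - C < q.pos := by exact_mod_cast hqs
          nlinarith)
      have h2 := hlog (2 * E + 1) (by positivity)
      push_cast at this
      have e2 : (k : ℝ) * (p.pos + R - p.pos) = k * R := by ring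
      rw [e2] at this
      linarith
    · have : (J2 : ℝ) < J1 + C := by exact_mod_cast not_le.mp hJ
      linarith
  linarith

/-- A nonnegative drift equals the exponent `k` comparing the two branchings. -/
lemma Bil.vel_eq (h : Bil C f) {k : ℕ} (hB : 2 ≤ Fintype.card B)
    (hAB : Fintype.card A = Fintype.card B ^ k) (hk : 1 ≤ k) (hv : 0 ≤ vel f) :
    vel f = k := by
  have h1 := h.vel_ge_card hB hAB hk hv
  have h2 : (1 : ℝ) ≤ k := by exact_mod_cast hk
  exact le_antisymm (h.vel_le_card hB hAB hk (h2.trans h1)) h1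

end slope
end LampQI

/-! ### Bounding the error -/

namespace LampQI

section improve
variable {A B : Type} [One A] [One B] [Fintype A]
variable {C : ℤ} {f : Pt A ≃ Pt B}

/-- The conclusion of `Bil.core` for a fixed `η`, with its constants. -/
def Core (f : Pt A ≃ Pt B) (K η c : ℝ) : Prop :=
  ∀ (p : Pt A) (R : ℕ) (Δ : ℝ), 0 ≤ Δ →
    Ht f p + vel f * R - Δ ≤ U^[R] (Ht f) p → ∃ x : ℤ → A, ∀ τ ≤ R,
      ∀ w, Mg (R - τ) (up p x τ) w → |Ht f w - Ht f p - vel f * τ| ≤ K * (Δ + η * R) + c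

/-- The deviation of the image height from slope `k` at `p`. -/
def dev (f : Pt A ≃ Pt B) (k : ℕ) (p : Pt A) : ℝ := Ht f p - k * p.pos

lemma up_mem_bx {cc : ℤ → A} {a b : ℤ} {q : Pt A} (hq : q ∈ Bx cc a b) (x : ℤ → A) (n : ℕ)
    (hn : q.pos + n ≤ b) : up q x n ∈ Bx cc a b := by
  refine ⟨by simp; linarith [hq.1], by simpa using hn, fun i hi => ?_⟩
  rw [up_cfg, if_neg (by have := hq.1; omega)]
  exact hq.2.2 i hi

/-- Somewhere within `J` blocks of length `L` above `q` there is a point `q1` of no larger deviation from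
which the deviation decreases by at most `δ m` over the next block; otherwise it would drop by more than
`2 m` in total. Such a `q1` is almost extremal, so by `Core` the cone above its siblings is controlled.
All points of the box below `q1` with the lamps of `q1` from `q1.pos + L` on are joined by paths whose
image height stays below a fixed bound, and so their images agree at all lamps beyond this bound. -/
lemma Bil.right_const (h : Bil C f) {k : ℕ} (hk : 1 ≤ k) (hvk : vel f = k) {K η c : ℝ}
    (hK : 0 ≤ K) (hη : 0 ≤ η) (hc : 0 ≤ c) (hcore : Core f K η c) {cc : ℤ → A} {a b : ℤ} {g m : ℝ}
    (hm : 0 < m) (hlin : Lin f k cc a b g m) {δ : ℝ} (hδ : 0 < δ) {L J : ℕ} (hL : 2 * m ≤ L)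
    (hJ : 2 < J * δ) {q : Pt A} (hq : q ∈ Bx cc a b) (hqb : q.pos + (J + 1) * L ≤ b) :
    ∃ q1 ∈ Bx cc a b, q.pos ≤ q1.pos ∧ q1.pos ≤ q.pos + J * L ∧
      ∀ v ∈ Bx cc a b, ∀ v' ∈ Bx cc a b, v.pos ≤ q1.pos → v'.pos ≤ q1.pos →
      (∀ i, q1.pos + L ≤ i → v.cfg i = q1.cfg i) → (∀ i, q1.pos + L ≤ i → v'.cfg i = q1.cfg i) →
      ∀ i : ℤ, k * (q1.pos + L) + dev f k q + (K * (δ * m + η * L) + c) + C ≤ i →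
        (f v).cfg i = (f v').cfg i := by
  -- a point above `q` from which the deviation cannot decrease much
  have step : ∀ n ≤ J, (∃ q1 ∈ Bx cc a b, q.pos ≤ q1.pos ∧ q1.pos ≤ q.pos + J * L ∧
      q1.pos + L ≤ b ∧ dev f k q1 ≤ dev f k q ∧
      ∀ x, dev f k q1 - δ * m ≤ dev f k (up q1 x L)) ∨
      ∃ q' ∈ Bx cc a b, q'.pos = q.pos + n * L ∧ dev f k q' ≤ dev f k q - n * (δ * m) := by
    intro n
    induction n with
    | zero => intro _; right; exact ⟨q, hq, by simp, by simp⟩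
    | succ n ih =>
      intro hn
      rcases ih (by omega) with h1 | ⟨q', hq', hpos, hdev⟩
      · exact Or.inl h1
      have hδm : 0 < δ * m := by positivity
      have hle : (n : ℤ) * L + L ≤ J * L := by
        have : (n : ℤ) + 1 ≤ J := by omega
        nlinarith
      have hqL : q'.pos + L ≤ b := by
        rw [hpos]; nlinarith
      by_cases hgood : ∀ x, dev f k q' - δ * m ≤ dev f k (up q' x L)
      · left
        refine ⟨q', hq', by rw [hpos]; nlinarith, by rw [hpos]; nlinarith, hqL, ?_, hgood⟩
        have : 0 ≤ (n : ℝ) * (δ * m) := by positivity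
        linarith
      · push Not at hgood
        obtain ⟨x, hx⟩ := hgood
        right
        refine ⟨up q' x L, up_mem_bx hq' x L hqL, ?_, ?_⟩
        · rw [up_pos, hpos]; push_cast; ring
        · push_cast; linarith
  have good : ∃ q1 ∈ Bx cc a b, q.pos ≤ q1.pos ∧ q1.pos ≤ q.pos + J * L ∧
      q1.pos + L ≤ b ∧ dev f k q1 ≤ dev f k q ∧
      ∀ x, dev f k q1 - δ * m ≤ dev f k (up q1 x L) := by
    rcases step J le_rfl with h1 | ⟨q', hq', -, hdev⟩
    · exact h1
    · exfalso
      have h1 := abs_le.mp (hlin q hq)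
      have h2 := abs_le.mp (hlin q' hq')
      unfold dev at hdev
      have : 2 * m < J * δ * m := by nlinarith
      nlinarith
  obtain ⟨q1, hq1, h1, h2, hq1b, hdev, hgood⟩ := good
  refine ⟨q1, hq1, h1, h2, ?_⟩
  obtain ⟨x, hx⟩ := hcore q1 L (δ * m) (by positivity) (le_Uit fun x => by
    have := hgood x
    unfold dev at this
    rw [up_pos] at this
    push_cast at this
    rw [hvk]; linarith)
  set E := K * (δ * m + η * L) + c with hE
  have hE0 : 0 ≤ E := by positivity
  have hk1 : (1 : ℝ) ≤ k := by exact_mod_cast hk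
  have hkL : 2 * m ≤ k * L := by nlinarith
  set Hs := Ht f q1 + k * L + E with hHs
  have hlow : ∀ u ∈ Bx cc a b, u.pos ≤ q1.pos → Ht f u ≤ Hs := by
    intro u hu hpos
    have a1 := abs_le.mp (hlin u hu)
    have a2 := abs_le.mp (hlin q1 hq1)
    have a3 : (u.pos : ℝ) ≤ q1.pos := by exact_mod_cast hpos
    have a4 : (k : ℝ) * u.pos ≤ k * q1.pos := by gcongr
    linarith
  have key : ∀ v ∈ Bx cc a b, v.pos ≤ q1.pos → (∀ i, q1.pos + L ≤ i → v.cfg i = q1.cfg i) →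
      Conn (fun u => Ht f u ≤ Hs) v (up q1 x L) := by
    intro v hv hvp hvc
    have c1 : Conn (fun u => Ht f u ≤ Hs) ⟨v.cfg, v.fin, a⟩ v := conn_move v a hv.1
      fun u hu hu1 hu2 => hlow u ⟨hu1, hu2.trans hv.2.1, by rw [hu]; exact hv.2.2⟩ (hu2.trans hvp)
    obtain ⟨n, hn⟩ := Int.eq_ofNat_of_zero_le (sub_nonneg.mpr hq1.1)
    set v0 : Pt A := ⟨v.cfg, v.fin, a⟩ with hv0
    have hv0m : v0 ∈ Bx cc a b := ⟨le_rfl, hv.1.trans hv.2.1, hv.2.2⟩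
    have c2 : Conn (fun u => Ht f u ≤ Hs) v0 (up v0 q1.cfg n) := conn_up _ _ _ fun j hj =>
      hlow _ (up_mem_bx hv0m _ _ (by have := hq1.2.1; simp only [hv0]; omega))
        (by simp [hv0]; omega)
    have hmg : Mg L q1 (up v0 q1.cfg n) := by
      refine ⟨by simp [hv0]; omega, fun i hi => ?_⟩
      rw [up_cfg]
      split_ifs with h3
      · rfl
      · simp only [hv0] at h3 ⊢
        rcases hi with hi | hi
        · rw [hq1.2.2 i (by omega), hv.2.2 i (by omega)]
        · exact (hvc i hi).symm
    have c3 : Conn (fun u => Ht f u ≤ Hs) (up v0 q1.cfg n) (up (up v0 q1.cfg n) x L) :=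
      conn_up _ _ _ fun j hj => by
        have b1 := (abs_le.mp (hx j hj _ (hmg.up x j hj))).2
        have b2 : (j : ℝ) ≤ L := by exact_mod_cast hj
        have b3 : (k : ℝ) * j ≤ k * L := by gcongr
        rw [hvk] at b1
        linarith
    rw [← hmg.up_eq x] at c3
    exact (c1.symm.trans c2).trans c3
  intro v hv v' hv' hvp hvp' hvc hvc' i hi
  have hi' : Hs + C ≤ i := by
    unfold dev at hi hdev
    rw [hHs]; linarith
  exact h.path_le (fun u hu => hu) ((key v hv hvp hvc).trans (key v' hv' hvp' hvc').symm) i hi'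

lemma rf_mem_bx {cc : ℤ → A} {a b : ℤ} {q : Pt A} (hq : q ∈ Bx cc a b) :
    rf q ∈ Bx (fun i => cc (-1 - i)) (-b) (-a) := by
  refine ⟨by simpa using hq.2.1, by simpa using hq.1, fun i hi => ?_⟩
  exact hq.2.2 _ (by omega)

lemma rf_mem_bx' {cc : ℤ → A} {a b : ℤ} {q : Pt A}
    (hq : q ∈ Bx (fun i => cc (-1 - i)) (-b) (-a)) : rf q ∈ Bx cc a b := by
  have := rf_mem_bx hq
  simpa using this

/-- The mirror image of `Bil.right_const`. -/
lemma Bil.left_const (h : Bil C f) {k : ℕ} (hk : 1 ≤ k) (hvk : vel (cj f) = k) {K η c : ℝ}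
    (hK : 0 ≤ K) (hη : 0 ≤ η) (hc : 0 ≤ c) (hcore : Core (cj f) K η c)
    {cc : ℤ → A} {a b : ℤ} {g m : ℝ}
    (hm : 0 < m) (hlin : Lin f k cc a b g m) {δ : ℝ} (hδ : 0 < δ) {L J : ℕ} (hL : 2 * m ≤ L)
    (hJ : 2 < J * δ) {p : Pt A} (hp : p ∈ Bx cc a b) (hpa : a + (J + 1) * L ≤ p.pos) :
    ∃ p1 ∈ Bx cc a b, p1.pos ≤ p.pos ∧ p.pos - J * L ≤ p1.pos ∧
      ∀ v ∈ Bx cc a b, ∀ v' ∈ Bx cc a b, p1.pos ≤ v.pos → p1.pos ≤ v'.pos →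
      (∀ i, i < p1.pos - L → v.cfg i = p1.cfg i) → (∀ i, i < p1.pos - L → v'.cfg i = p1.cfg i) →
      ∀ i : ℤ, (i : ℝ) ≤ k * (p1.pos - L) + dev f k p - (K * (δ * m + η * L) + c) - C - 1 →
        (f v).cfg i = (f v').cfg i := by
  have hlin' : Lin (cj f) k (fun i => cc (-1 - i)) (-b) (-a) (-g) m := by
    intro q hq
    have := hlin _ (rf_mem_bx' hq)
    rw [Ht_cj, ← abs_neg]
    rw [rf_pos] at this
    push_cast at this
    convert this using 2
    ring
  obtain ⟨q1, hq1, h1, h2, h3⟩ := h.conj.right_const hk hvk hK hη hc hcore hm hlin' hδ hL hJ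
    (rf_mem_bx hp) (by rw [rf_pos]; linarith)
  rw [rf_pos] at h1 h2
  refine ⟨rf q1, rf_mem_bx' hq1, by rw [rf_pos]; linarith, by rw [rf_pos]; linarith, ?_⟩
  intro v hv v' hv' hvp hvp' hvc hvc' i hi
  rw [rf_pos] at hvp hvp' hvc hvc' hi
  have := h3 (rf v) (rf_mem_bx hv) (rf v') (rf_mem_bx hv') (by rw [rf_pos]; linarith)
    (by rw [rf_pos]; linarith) (fun j hj => by
      rw [rf_cfg, hvc _ (by omega), rf_cfg]; congr 1; ring) (fun j hj => by
      rw [rf_cfg, hvc' _ (by omega), rf_cfg]; congr 1; ring) (-1 - i) (by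
      unfold dev at hi ⊢
      rw [Ht_cj, rf_rf, rf_pos]
      push_cast at hi ⊢
      linarith)
  rw [cj_apply, cj_apply, rf_rf, rf_rf, rf_cfg, rf_cfg] at this
  simpa using this

variable [Fintype B]

/-- The deviation essentially does not decrease upwards: by `Bil.left_const` at `p` and
`Bil.right_const` at `q` the images of a slab at the height of `p` agree outside a window which a drop
of the deviation shortens, and `inj_count` bounds its length below. -/
lemma Bil.drop (h : Bil C f) {k : ℕ} (hk : 1 ≤ k) (hvk : vel f = k) (hvk' : vel (cj f) = k)
    (hB : 2 ≤ Fintype.card B) (hAB : Fintype.card A = Fintype.card B ^ k) {K η c : ℝ}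
    (hK : 0 ≤ K) (hη : 0 ≤ η) (hc : 0 ≤ c) (hcore : Core f K η c) (hcore' : Core (cj f) K η c)
    {cc : ℤ → A} {a b : ℤ} {g m : ℝ}
    (hm : 0 < m) (hlin : Lin f k cc a b g m) {δ : ℝ} (hδ : 0 < δ) {L J : ℕ} (hL : 2 * m ≤ L)
    (hJ : 2 < J * δ) {p q : Pt A} (hp : p ∈ Bx cc a b) (hq : q ∈ Bx cc a b)
    (hpa : a + (J + 1) * L ≤ p.pos) (hqb : q.pos + (J + 1) * L ≤ b) (hpq : p.pos ≤ q.pos) :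
    dev f k p - dev f k q ≤
      2 * (K * (δ * m + η * L) + c) + 2 * C + 3 + 2 * Real.log (2 * m + 1) := by
  obtain ⟨q1, hq1, q2, q3, q4⟩ := h.right_const hk hvk hK hη hc hcore hm hlin hδ hL hJ hq hqb
  obtain ⟨p1, hp1, p2, p3, p4⟩ := h.left_const hk hvk' hK hη hc hcore' hm hlin hδ hL hJ hp hpa
  set E := K * (δ * m + η * L) + c with hE
  have hE0 : 0 ≤ E := by positivity
  have hC : (1 : ℝ) ≤ C := by exact_mod_cast h.one_le
  have hk1 : (1 : ℝ) ≤ k := by exact_mod_cast hk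
  have ep : ((J : ℤ) + 1) * L = J * L + L := by ring
  rw [ep] at hpa hqb
  obtain ⟨ℓ, hℓ⟩ := Int.eq_ofNat_of_zero_le (show 0 ≤ q1.pos + L - (p1.pos - L) by omega)
  have hℓr : (ℓ : ℝ) = q1.pos + L - (p1.pos - L) := by exact_mod_cast hℓ.symm
  have hℓL : 2 * (L : ℝ) ≤ ℓ := by
    have : 2 * (L : ℤ) ≤ ℓ := by omega
    exact_mod_cast this
  -- the lamps of `p1` to the left of the window and those of `q1` to its right
  set p0 := mix q1 p1.cfg a (p1.pos - L) p.pos with hp0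
  have hcfg1 : ∀ v ∈ slab p0 (p1.pos - L) ℓ p.pos, ∀ i, i < p1.pos - L → v.cfg i = p1.cfg i := by
    intro v hv i hi
    rw [(mem_slab.mp hv).2 i (by omega), hp0, mix_cfg]
    split_ifs with h1
    · rfl
    · rw [hq1.2.2 i (by omega), hp1.2.2 i (by omega)]
  have hcfg2 : ∀ v ∈ slab p0 (p1.pos - L) ℓ p.pos, ∀ i, q1.pos + L ≤ i → v.cfg i = q1.cfg i := by
    intro v hv i hi
    rw [(mem_slab.mp hv).2 i (by omega), hp0, mix_cfg, if_neg (by omega)]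
  have hmem : ∀ v ∈ slab p0 (p1.pos - L) ℓ p.pos, v ∈ Bx cc a b := by
    intro v hv
    have hpos := (mem_slab.mp hv).1
    refine ⟨by rw [hpos]; exact hp.1, by rw [hpos]; exact hp.2.1, fun i hi => ?_⟩
    rcases hi with hi | hi
    · rw [hcfg1 v hv i (by omega), hp1.2.2 i (by omega)]
    · rw [hcfg2 v hv i (by omega), hq1.2.2 i (by omega)]
  have b1 := abs_le.mp (hlin p hp)
  have b2 := abs_le.mp (hlin q hq)
  have hkl : 4 * m ≤ k * ℓ := by nlinarith
  have e1 : (k : ℝ) * ℓ = k * (q1.pos + L) - k * (p1.pos - L) := by rw [hℓr]; ring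
  have := inj_count f hB hAB p0 (p1.pos - L) ℓ p.pos (k * p.pos + g - m) (2 * m)
    (k * (p1.pos - L) + dev f k p - E - C - 1) (k * (q1.pos + L) + dev f k q + E + C)
    (by positivity) (by unfold dev; linarith) (by
      intro v hv
      have a1 := abs_le.mp (hlin v (hmem v hv))
      rw [(mem_slab.mp hv).1] at a1
      constructor <;> linarith) (by
      intro v hv v' hv' i hi
      have s1 := (mem_slab.mp hv).1
      have s2 := (mem_slab.mp hv').1
      rcases hi with hi | hi
      · exact p4 v (hmem v hv) v' (hmem v' hv') (by omega) (by omega) (hcfg1 v hv) (hcfg1 v' hv')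
          i hi.le
      · exact q4 v (hmem v hv) v' (hmem v' hv') (by omega) (by omega) (hcfg2 v hv) (hcfg2 v' hv')
          i hi)
  linarith

/-- The deviation does not increase upwards either: as it does not drop, the image of the box between `p`
and `q` covers a target box which a rise of the deviation lengthens, and `Bil.surj_count` bounds its
height above. -/
lemma Bil.rise (h : Bil C f) {k : ℕ} (hk : 1 ≤ k)
    (hB : 2 ≤ Fintype.card B) (hAB : Fintype.card A = Fintype.card B ^ k)
    {cc : ℤ → A} {a b M : ℤ} {g m D : ℝ} (hm : 0 ≤ m) (hD : 0 ≤ D) (hlin : Lin f k cc a b g m)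
    (hM : 0 ≤ M)
    (hdrop : ∀ p ∈ Bx cc a b, ∀ q ∈ Bx cc a b, a + M ≤ p.pos → q.pos + M ≤ b → p.pos ≤ q.pos →
      dev f k p - dev f k q ≤ D)
    {p q : Pt A} (hp : p ∈ Bx cc a b) (hq : q ∈ Bx cc a b)
    (hpa : a + (M + C) ≤ p.pos) (hqb : q.pos + (M + C) ≤ b) (hpq : p.pos ≤ q.pos) :
    dev f k q - dev f k p ≤ 2 * D + 4 + (2 * k + 1) * C + 2 * Real.log (2 * m + 1) := by
  have hC := h.one_le
  have hCr : (1 : ℝ) ≤ C := by exact_mod_cast h.one_le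
  have hk1 : (1 : ℝ) ≤ k := by exact_mod_cast hk
  have hsub : Bx p.cfg (p.pos - C) (q.pos + C) ⊆ Bx cc a b := by
    intro v hv
    exact ⟨by have := hv.1; omega, by have := hv.2.1; omega,
      (hv.2.2.mono (by omega) (by omega)).trans hp.2.2⟩
  set J1 := ⌈k * p.pos + dev f k p + D⌉ + 1 with hJ1
  set J2 := ⌊k * q.pos + dev f k q - D⌋ - 1 with hJ2
  have a1 : (J1 : ℝ) < k * p.pos + dev f k p + D + 2 := by
    rw [hJ1]; push_cast; linarith [Int.ceil_lt_add_one (k * p.pos + dev f k p + D)]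
  have a2 : k * q.pos + dev f k q - D - 2 < J2 := by
    rw [hJ2]; push_cast; linarith [Int.lt_floor_add_one (k * q.pos + dev f k q - D)]
  have a3 : k * p.pos + dev f k p + D + 1 ≤ J1 := by
    rw [hJ1]; push_cast; linarith [Int.le_ceil (k * p.pos + dev f k p + D)]
  have a4 : J2 ≤ k * q.pos + dev f k q - D - 1 := by
    rw [hJ2]; push_cast; linarith [Int.floor_le (k * q.pos + dev f k q - D)]
  have hpqr : (k : ℝ) * p.pos ≤ k * q.pos := by
    have : (p.pos : ℝ) ≤ q.pos := by exact_mod_cast hpq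
    gcongr
  have hlog : 0 ≤ Real.log (2 * m + 1) := Real.log_nonneg (by linarith)
  have hkC : (0 : ℝ) ≤ k * C := by positivity
  by_cases hJ : J1 + C ≤ J2
  · have := h.surj_count hB hAB (p := p) (s := p.pos - C) (t := q.pos + C) (by omega) hJ hk1 hm
      (fun v hv => hlin v (hsub hv)) (by
        intro v hv hvs
        have h1 := hdrop v (hsub hv) p hp (by have := hv.1; omega) (by omega) (by omega)
        have h2 : (v.pos : ℝ) ≤ p.pos := by
          have : v.pos ≤ p.pos := by omega
          exact_mod_cast this
        have h3 : (k : ℝ) * v.pos ≤ k * p.pos := by gcongr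
        unfold dev at h1 a3
        linarith) (by
        intro v hv hvs
        have h1 := hdrop q hq v (hsub hv) (by omega) (by have := hv.2.1; omega) (by omega)
        have h2 : (q.pos : ℝ) ≤ v.pos := by
          have : q.pos ≤ v.pos := by omega
          exact_mod_cast this
        have h3 : (k : ℝ) * q.pos ≤ k * v.pos := by gcongr
        unfold dev at h1 a4
        linarith)
    push_cast at this
    have e : (k : ℝ) * (q.pos + C - (p.pos - C)) = k * q.pos - k * p.pos + 2 * (k * C) := by ring
    rw [e] at this
    linarith
  · have : (J2 : ℝ) < J1 + C := by exact_mod_cast not_le.mp hJ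
    linarith

/-- Cutting off a collar whose width is proportional to the error halves the error. -/
lemma Bil.halve (h : Bil C f) {k : ℕ} (hk : 1 ≤ k) (hvk : vel f = k)
    (hB : 2 ≤ Fintype.card B) (hAB : Fintype.card A = Fintype.card B ^ k) :
    ∃ M C0 : ℝ, 0 ≤ M ∧ 1 ≤ C0 ∧ ∀ (cc : ℤ → A) (a b : ℤ) (g m : ℝ), C0 ≤ m → Lin f k cc a b g m →
      ∀ a' b' : ℤ, a + M * m ≤ a' → b' + M * m ≤ b → ∃ g', Lin f k cc a' b' g' (m / 2) := by
  have hN : 2 ≤ Fintype.card A := by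
    rw [hAB]; exact hB.trans (Nat.le_self_pow (by omega) _)
  have hv : 0 ≤ vel f := by rw [hvk]; positivity
  have hvk' : vel (cj f) = k := by rw [h.vel_cj hv hN, hvk]
  have hC := h.one_le
  have hCr : (1 : ℝ) ≤ C := by exact_mod_cast h.one_le
  obtain ⟨K1, hK10, hK1⟩ := h.core hv hN
  obtain ⟨K2, hK20, hK2⟩ := h.conj.core (by rw [hvk']; positivity) hN
  set K := K1 + K2 with hKdef
  have hK0 : 0 ≤ K := by positivity
  -- with this `δ`, which also serves as `η`, the main term of the drop is at most `m / 8`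
  set δ := 1 / (64 * (K + 1)) with hδdef
  have hδ : 0 < δ := by positivity
  have hKδ : K * δ ≤ 1 / 64 := by
    rw [hδdef, mul_one_div, div_le_div_iff₀ (by positivity) (by positivity)]; linarith
  have hδ1 : δ ≤ 1 := by
    rw [hδdef, div_le_one (by positivity)]; linarith
  obtain ⟨c1, hc10, hc1⟩ := hK1 δ hδ hδ1
  obtain ⟨c2, hc20, hc2⟩ := hK2 δ hδ hδ1
  set c := c1 + c2 with hcdef
  have hc0 : 0 ≤ c := by positivity
  have core1 : Core f K δ c := by
    intro p R Δ hΔ hU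
    obtain ⟨x, hx⟩ := hc1 p R Δ hΔ hU
    refine ⟨x, fun τ hτ w hw => (hx τ hτ w hw).trans ?_⟩
    have : 0 ≤ K2 * (Δ + δ * R) := by positivity
    rw [hKdef, hcdef, add_mul]; linarith
  have core2 : Core (cj f) K δ c := by
    intro p R Δ hΔ hU
    obtain ⟨x, hx⟩ := hc2 p R Δ hΔ hU
    refine ⟨x, fun τ hτ w hw => (hx τ hτ w hw).trans ?_⟩
    have : 0 ≤ K1 * (Δ + δ * R) := by positivity
    rw [hKdef, hcdef, add_mul]; linarith
  obtain ⟨J, hJ⟩ := exists_nat_gt (2 / δ)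
  rw [div_lt_iff₀ hδ] at hJ
  obtain ⟨c3, hc30, hlog⟩ := log_small (show (0 : ℝ) < 1 / 100 by norm_num)
  set Z := 4 * c + 4 * C + 10 + (2 * k + 1) * C + 3 * c3 + 1 with hZ
  have hZ1 : 1 ≤ Z := by
    have : (0 : ℝ) ≤ (2 * k + 1) * C := by positivity
    linarith
  refine ⟨(J + 1) * 3 + C, 16 * Z, by positivity, by linarith, ?_⟩
  intro cc a b g m hm hlin a' b' ha' hb'
  have hm1 : 1 ≤ m := by linarith
  set L := ⌈2 * m⌉₊ with hLdef
  have hL : 2 * m ≤ L := Nat.le_ceil _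
  have hL3 : (L : ℝ) ≤ 3 * m := by
    linarith [Nat.ceil_lt_add_one (show 0 ≤ 2 * m by linarith)]
  set D := 2 * (K * (δ * m + δ * L) + c) + 2 * C + 3 + 2 * Real.log (2 * m + 1) with hD
  have hlog0 : 0 ≤ Real.log (2 * m + 1) := Real.log_nonneg (by linarith)
  have hlog1 := hlog (2 * m + 1) (by linarith)
  have hD0 : 0 ≤ D := by positivity
  have hDle : D ≤ m * (1 / 8) + 2 * c + 2 * C + 3 + 2 * Real.log (2 * m + 1) := by
    have : K * (δ * m + δ * L) ≤ 1 / 64 * (4 * m) := by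
      calc K * (δ * m + δ * L) = K * δ * (m + L) := by ring
        _ ≤ 1 / 64 * (4 * m) := by
          apply mul_le_mul hKδ (by linarith) (by positivity) (by norm_num)
    rw [hD]; linarith
  have hfin : 2 * D + 4 + (2 * k + 1) * C + 2 * Real.log (2 * m + 1) ≤ m / 2 := by
    rw [hZ] at hm
    linarith
  have hdrop : ∀ p ∈ Bx cc a b, ∀ q ∈ Bx cc a b, a + ((J : ℤ) + 1) * L ≤ p.pos →
      q.pos + ((J : ℤ) + 1) * L ≤ b → p.pos ≤ q.pos → dev f k p - dev f k q ≤ D := by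
    intro p hp q hq h1 h2 h3
    exact h.drop hk hvk hvk' hB hAB hK0 hδ.le hc0 core1 core2 (by linarith) hlin hδ hL hJ hp hq
      h1 h2 h3
  have hML : (((J : ℤ) + 1) * L + C : ℤ) ≤ ((J + 1) * 3 + C) * m := by
    push_cast
    have h1 : ((J : ℝ) + 1) * L ≤ (J + 1) * (3 * m) := by gcongr
    nlinarith
  have ha : a + (((J : ℤ) + 1) * L + C) ≤ a' := by
    have : ((a + (((J : ℤ) + 1) * L + C) : ℤ) : ℝ) ≤ a' := by
      rw [Int.cast_add]; linarith
    exact_mod_cast this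
  have hb : b' + (((J : ℤ) + 1) * L + C) ≤ b := by
    have : ((b' + (((J : ℤ) + 1) * L + C) : ℤ) : ℝ) ≤ b := by
      rw [Int.cast_add]; linarith
    exact_mod_cast this
  have hJL : (0 : ℤ) ≤ ((J : ℤ) + 1) * L := by positivity
  have hsub : Bx cc a' b' ⊆ Bx cc a b := fun v hv =>
    ⟨by have := hv.1; omega, by have := hv.2.1; omega, hv.2.2.mono (by omega) (by omega)⟩
  have hle : ∀ p ∈ Bx cc a' b', ∀ q ∈ Bx cc a' b', p.pos ≤ q.pos →
      |dev f k p - dev f k q| ≤ m / 2 := by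
    intro p hp q hq hpq
    have p1 := hp.1
    have q1 := hq.2.1
    rw [abs_le]
    constructor
    · have := h.rise hk hB hAB (by linarith) hD0 hlin hJL hdrop (hsub hp) (hsub hq)
        (by omega) (by omega) hpq
      linarith
    · have := hdrop p (hsub hp) q (hsub hq) (by omega) (by omega) hpq
      have : (0 : ℝ) ≤ (2 * k + 1) * C := by positivity
      linarith
  by_cases hne : ∃ p0, p0 ∈ Bx cc a' b'
  · obtain ⟨p0, hp0⟩ := hne
    refine ⟨dev f k p0, fun q hq => ?_⟩
    change |dev f k q - dev f k p0| ≤ m / 2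
    rcases le_total q.pos p0.pos with h1 | h1
    · exact hle q hq p0 hp0 h1
    · rw [abs_sub_comm]; exact hle p0 hp0 q hq h1
  · exact ⟨0, fun q hq => (hne ⟨q, hq⟩).elim⟩

/-- On arbitrarily large boxes the image height is affine up to a uniformly bounded error: start with a
box from `Bil.linbox` whose error is a small fraction of its size and halve the error repeatedly. The
collars cut off form a geometric series of total width less than half of the box. -/
lemma Bil.rigid (h : Bil C f) {k : ℕ} (hk : 1 ≤ k) (hv : 0 ≤ vel f)
    (hB : 2 ≤ Fintype.card B) (hAB : Fintype.card A = Fintype.card B ^ k) :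
    ∃ C0 : ℝ, 0 ≤ C0 ∧ ∀ R0 : ℕ, ∃ (p : Pt A) (s t : ℤ) (g : ℝ), s + R0 ≤ t ∧
      Lin f k p.cfg s t g C0 := by
  have hvk := h.vel_eq hB hAB hk hv
  have hN : 2 ≤ Fintype.card A := by
    rw [hAB]; exact hB.trans (Nat.le_self_pow (by omega) _)
  obtain ⟨M, C0, hM, hC0, hhalve⟩ := h.halve hk hvk hB hAB
  refine ⟨C0, by linarith, fun R0 => ?_⟩
  have iter : ∀ (j : ℕ) (cc : ℤ → A) (a b : ℤ) (g m : ℝ), 0 ≤ m → m ≤ 2 ^ j * C0 →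
      Lin f k cc a b g m →
      a + 4 * (M + 1) * m + R0 ≤ b → ∃ (s t : ℤ) (g' : ℝ), s + R0 ≤ t ∧ Lin f k cc s t g' C0 := by
    intro j
    induction j with
    | zero =>
      intro cc a b g m hm0 hm hlin hab
      refine ⟨a, b, g, ?_, fun q hq => (hlin q hq).trans (by simpa using hm)⟩
      have : 0 ≤ 4 * (M + 1) * m := by positivity
      have : ((a + R0 : ℤ) : ℝ) ≤ b := by push_cast; linarith
      exact_mod_cast this
    | succ j ih =>
      intro cc a b g m hm0 hm hlin hab
      by_cases hmC : m ≤ C0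
      · refine ⟨a, b, g, ?_, fun q hq => (hlin q hq).trans hmC⟩
        have : 0 ≤ 4 * (M + 1) * m := by positivity
        have : ((a + R0 : ℤ) : ℝ) ≤ b := by push_cast; linarith
        exact_mod_cast this
      · push Not at hmC
        obtain ⟨g', hg'⟩ := hhalve cc a b g m hmC.le hlin ⌈a + M * m⌉ ⌊b - M * m⌋ (Int.le_ceil _)
          (by linarith [Int.floor_le (b - M * m)])
        refine ih cc _ _ g' (m / 2) (by linarith) (by rw [pow_succ] at hm; linarith) hg' ?_
        have h1 := Int.ceil_lt_add_one (a + M * m)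
        have h2 := Int.lt_floor_add_one (b - M * m)
        nlinarith
  obtain ⟨K, hK0, hK⟩ := h.linbox hv hN
  -- the collars for an error `K * η * R` then have total width at most `R / 2`
  set η := 1 / (8 * (M + 1) * (K + 1)) with hη
  have hη0 : 0 < η := by positivity
  have hη1 : η ≤ 1 := by
    rw [hη, div_le_one (by positivity)]; nlinarith
  have hKη : 4 * (M + 1) * (K * η) ≤ 1 / 2 := by
    have : 4 * (M + 1) * (K * η) = (K / (K + 1)) / 2 := by rw [hη]; field_simp; ring
    rw [this]
    have : K / (K + 1) ≤ 1 := by rw [div_le_one (by positivity)]; linarith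
    linarith
  obtain ⟨c, hc0, hc⟩ := hK η hη0 hη1
  obtain ⟨R, hR⟩ := exists_nat_ge (1 + 2 * (4 * (M + 1) * c + R0))
  have hR1 : 1 ≤ R := by
    have : (1 : ℝ) ≤ R := by
      have : 0 ≤ 4 * (M + 1) * c := by positivity
      linarith [(Nat.cast_nonneg R0 : (0 : ℝ) ≤ R0)]
    exact_mod_cast this
  obtain ⟨p, hp⟩ := hc R hR1
  rw [hvk] at hp
  obtain ⟨j, hj⟩ := pow_unbounded_of_one_lt (K * η * R + c) (one_lt_two (α := ℝ))
  obtain ⟨s, t, g', h1, h2⟩ := iter j p.cfg p.pos (p.pos + R) _ (K * η * R + c) (by positivity)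
    (hj.le.trans (by nlinarith [pow_pos (two_pos (α := ℝ)) j])) hp (by
      push_cast
      have : 4 * (M + 1) * (K * η * R + c) = 4 * (M + 1) * (K * η) * R + 4 * (M + 1) * c := by ring
      rw [this]
      have : 4 * (M + 1) * (K * η) * R ≤ 1 / 2 * R := by gcongr
      linarith)
  exact ⟨p, s, t, g', h1, h2⟩

end improve
end LampQI

/-! ### Divisibility -/

namespace LampQI

section stack
variable {A : Type} [One A] [Fintype A]

open Classical in
/-- The points with height in `I` and lamps those of `p` outside `[s, s + ℓ)`. -/
noncomputable def stack (p : Pt A) (s : ℤ) (ℓ : ℕ) (I : Finset ℤ) : Finset (Pt A) :=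
  I.biUnion fun u => slab p s ℓ u

lemma mem_stack {p q : Pt A} {s : ℤ} {ℓ : ℕ} {I : Finset ℤ} :
    q ∈ stack p s ℓ I ↔ q.pos ∈ I ∧ Agr s (s + ℓ) q.cfg p.cfg := by
  classical
  unfold stack
  rw [Finset.mem_biUnion]
  constructor
  · rintro ⟨u, hu, hq⟩
    rw [mem_slab] at hq
    exact ⟨hq.1 ▸ hu, hq.2⟩
  · rintro ⟨h1, h2⟩
    exact ⟨_, h1, mem_slab.mpr ⟨rfl, h2⟩⟩

lemma card_stack (p : Pt A) (s : ℤ) (ℓ : ℕ) (I : Finset ℤ) :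
    (stack p s ℓ I).card = I.card * Fintype.card A ^ ℓ := by
  classical
  unfold stack
  rw [Finset.card_biUnion]
  · simp [card_slab]
  · intro u _ u' _ huu
    rw [Function.onFun, Finset.disjoint_left]
    intro q hq hq'
    exact huu ((mem_slab.mp hq).1.symm.trans (mem_slab.mp hq').1)

/-- A finite union of full boxes over `[J1, J1 + j]` has cardinality divisible by that of a box. -/
lemma dvd_card (T : Finset (Pt A)) (J1 : ℤ) (j : ℕ)
    (h1 : ∀ w ∈ T, J1 ≤ w.pos ∧ w.pos ≤ J1 + j)
    (h2 : ∀ w ∈ T, ∀ w' ∈ Bx w.cfg J1 (J1 + j), w' ∈ T) :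
    (j + 1) * Fintype.card A ^ j ∣ T.card := by
  classical
  let cls : Pt A → Pt A := fun w => mix w (fun _ => 1) J1 (J1 + j) J1
  rw [Finset.card_eq_sum_card_image cls T]
  refine Finset.dvd_sum fun b hb => ?_
  obtain ⟨w, hw, rfl⟩ := Finset.mem_image.mp hb
  have e : T.filter (fun w' => cls w' = cls w) = stack w J1 j (Finset.Icc J1 (J1 + j)) := by
    ext w'
    rw [Finset.mem_filter, mem_stack, Finset.mem_Icc]
    constructor
    · rintro ⟨a1, a2⟩
      refine ⟨h1 w' a1, fun i hi => ?_⟩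
      have := congrArg (fun q => q.cfg i) a2
      simp only [cls, mix_cfg] at this
      rwa [if_neg (by omega), if_neg (by omega)] at this
    · rintro ⟨a1, a2⟩
      refine ⟨h2 w hw w' ⟨a1.1, a1.2, a2⟩, ?_⟩
      ext i
      · simp only [cls, mix_cfg]
        split_ifs with hi
        · rfl
        · exact a2 i (by omega)
      · rfl
  rw [e, card_stack]
  simp only [Int.card_Icc]
  rw [show (J1 + j + 1 - J1).toNat = j + 1 by omega]

end stack

section final
variable {A B : Type} [One A] [One B] [Fintype A] [Fintype B]
variable {C : ℤ} {f : Pt A ≃ Pt B}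

/-- Comparing a large box with its image forces `k` to divide a power of the branching. Take a box of
height `ℓ` from `Bil.rigid` and the part `T` of its image with heights in `[J1, J1 + j]`, where
`k * ℓ = j + 1 + e` for a constant `e`. Away from the boundary layers `T` is saturated, so its size is
a multiple `(j + 1) * n ^ j * q` of that of a target box. It also lies between
`(ℓ + 1 - 2 e) * n ^ (k ℓ)` and `(ℓ + 1) * n ^ (k ℓ)`, and for `ℓ` large this forces
`k * q = n ^ (e + 1)`. -/
lemma Bil.dvd_pow_card (h : Bil C f) {k : ℕ} (hk : 1 ≤ k) (hv : 0 ≤ vel f)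
    (hB : 2 ≤ Fintype.card B) (hAB : Fintype.card A = Fintype.card B ^ k) :
    ∃ e : ℕ, k ∣ Fintype.card B ^ e := by
  classical
  obtain ⟨m, hm, hbox⟩ := h.rigid hk hv hB hAB
  have hC := h.one_le
  have hCr : (1 : ℝ) ≤ C := by exact_mod_cast h.one_le
  have hk1 : (1 : ℝ) ≤ k := by exact_mod_cast hk
  set n := Fintype.card B with hn
  -- `e` exceeds the total height lost at the two boundary layers
  obtain ⟨e, he⟩ := exists_nat_ge (2 * k * C + 2 * m + 10)
  set M := n ^ (e + 1) with hM
  have hM0 : 0 < M := by positivity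
  obtain ⟨p, s, t, g, hst, hlin⟩ := hbox (2 * M * e + M + 3 * e + C.toNat + 3)
  obtain ⟨ℓ, hℓ⟩ := Int.eq_ofNat_of_zero_le (show 0 ≤ t - s by omega)
  obtain rfl : t = s + ℓ := by omega
  have hℓbig : 2 * M * e + M + 3 * e + C.toNat + 3 ≤ ℓ := by omega
  clear hℓ hst
  have hkℓ : ℓ ≤ k * ℓ := Nat.le_mul_of_pos_left _ (by omega)
  obtain ⟨j, hj⟩ : ∃ j, k * ℓ = j + 1 + e := ⟨k * ℓ - 1 - e, by omega⟩
  have hjr : (k : ℝ) * ℓ = j + 1 + e := by exact_mod_cast hj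
  set J1 := ⌈g + k * s + k * C + m⌉ + 1 with hJ1
  have a1 : (J1 : ℝ) < g + k * s + k * C + m + 2 := by
    rw [hJ1]; push_cast; linarith [Int.ceil_lt_add_one (g + k * s + k * C + m)]
  have a3 : g + k * s + k * C + m + 1 ≤ J1 := by
    rw [hJ1]; push_cast; linarith [Int.le_ceil (g + k * s + k * C + m)]
  have hkC : (C : ℝ) ≤ k * C := by nlinarith
  have hlow : ∀ v ∈ Bx p.cfg s (s + ℓ), v.pos < s + C → Ht f v < J1 := by
    intro v hv hvs
    have h1 := abs_le.mp (hlin v hv)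
    have h2 : (v.pos : ℝ) ≤ s + C := by exact_mod_cast hvs.le
    have h3 : (k : ℝ) * v.pos ≤ k * (s + C) := by gcongr
    linarith
  have hhigh : ∀ v ∈ Bx p.cfg s (s + ℓ), s + ℓ - C < v.pos → ((J1 + j : ℤ) : ℝ) < Ht f v := by
    intro v hv hvs
    have h1 := abs_le.mp (hlin v hv)
    have h2 : (s : ℝ) + ℓ - C ≤ v.pos := by exact_mod_cast hvs.le
    have h3 : (k : ℝ) * (s + ℓ - C) ≤ k * v.pos := by gcongr
    push_cast
    have h4 : (k : ℝ) * (s + ℓ - C) = k * s + (j + 1 + e) - k * C := by rw [← hjr]; ring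
    linarith
  set S := stack p s ℓ (Finset.Icc s (s + ℓ)) with hS
  have hSb : ∀ v, v ∈ S ↔ v ∈ Bx p.cfg s (s + ℓ) := by
    intro v
    rw [hS, mem_stack, Finset.mem_Icc, and_assoc]; rfl
  set T := (S.image f).filter (fun w => J1 ≤ w.pos ∧ w.pos ≤ J1 + j) with hT
  have hdvd : (j + 1) * n ^ j ∣ T.card := by
    refine dvd_card T J1 j (fun w hw => (Finset.mem_filter.mp hw).2) ?_
    intro w hw w' hw'
    obtain ⟨b1, b2, b3⟩ := Finset.mem_filter.mp hw
    obtain ⟨v, hv, rfl⟩ := Finset.mem_image.mp b1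
    refine Finset.mem_filter.mpr ⟨Finset.mem_image.mpr ⟨f.symm w', ?_, by simp⟩, hw'.1, hw'.2.1⟩
    rw [hSb]
    exact h.surj (bx_closed hlow hhigh) (w0 := f v) (by simpa [hSb] using hv) b2 b3 hw'
  have hup : T.card ≤ (ℓ + 1) * n ^ (k * ℓ) := by
    refine (Finset.card_filter_le _ _).trans (Finset.card_image_le.trans ?_)
    rw [hS, card_stack, hAB, ← pow_mul, Int.card_Icc]
    rw [show (s + ℓ + 1 - s).toNat = ℓ + 1 by omega]
  have hdown : (ℓ + 1 - 2 * e) * n ^ (k * ℓ) ≤ T.card := by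
    have hsub : (stack p s ℓ (Finset.Icc (s + e) (s + ℓ - e))).image f ⊆ T := by
      intro w hw
      obtain ⟨v, hv, rfl⟩ := Finset.mem_image.mp hw
      rw [mem_stack, Finset.mem_Icc] at hv
      have hvb : v ∈ Bx p.cfg s (s + ℓ) := ⟨by omega, by omega, hv.2⟩
      have h1 := abs_le.mp (hlin v hvb)
      have h2 : (s : ℝ) + e ≤ v.pos := by exact_mod_cast hv.1.1
      have h3 : (v.pos : ℝ) ≤ s + ℓ - e := by exact_mod_cast hv.1.2
      have h4 : (k : ℝ) * (s + e) ≤ k * v.pos := by gcongr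
      have h5 : (k : ℝ) * v.pos ≤ k * (s + ℓ - e) := by gcongr
      have h6 : (k : ℝ) * (s + ℓ - e) = k * s + (j + 1 + e) - k * e := by rw [← hjr]; ring
      have h7 : (e : ℝ) ≤ k * e := by nlinarith [(Nat.cast_nonneg e : (0 : ℝ) ≤ e)]
      refine Finset.mem_filter.mpr ⟨Finset.mem_image_of_mem _ ((hSb v).mpr hvb), ?_, ?_⟩
      · have : (J1 : ℝ) ≤ Ht f v := by linarith
        unfold Ht at this; exact_mod_cast this
      · have : Ht f v ≤ ((J1 + j : ℤ) : ℝ) := by push_cast; linarith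
        unfold Ht at this; exact_mod_cast this
    refine le_trans (le_of_eq ?_) (Finset.card_le_card hsub)
    rw [Finset.card_image_of_injective _ f.injective, card_stack, hAB, ← pow_mul, Int.card_Icc]
    congr 1
    omega
  obtain ⟨q, hq⟩ := hdvd
  have hpow : n ^ (k * ℓ) = n ^ j * M := by rw [hj, hM, ← pow_add]; congr 1; ring
  have hnj : 0 < n ^ j := by positivity
  have hup' : (j + 1) * q ≤ (ℓ + 1) * M := by
    rw [hq, hpow] at hup
    refine Nat.le_of_mul_le_mul_left ?_ hnj
    calc n ^ j * ((j + 1) * q) = (j + 1) * n ^ j * q := by ring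
      _ ≤ _ := hup
      _ = _ := by ring
  have hdown' : (ℓ + 1 - 2 * e) * M ≤ (j + 1) * q := by
    rw [hq, hpow] at hdown
    refine Nat.le_of_mul_le_mul_left ?_ hnj
    calc n ^ j * ((ℓ + 1 - 2 * e) * M) = (ℓ + 1 - 2 * e) * (n ^ j * M) := by ring
      _ ≤ _ := hdown
      _ = _ := by ring
  obtain ⟨r, hr⟩ : ∃ r, ℓ + 1 = r + 2 * e := ⟨ℓ + 1 - 2 * e, by omega⟩
  rw [hr, Nat.add_sub_cancel] at hdown'
  have hq2 : q ≤ 2 * M := by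
    by_contra! hlt
    have h1 : ℓ + 1 ≤ 2 * (j + 1) := by omega
    have : (ℓ + 1) * M < (j + 1) * q := by nlinarith
    omega
  refine ⟨e + 1, q, ?_⟩
  change M = k * q
  have hmain : k * q * ℓ = (j + 1) * q + q * e := by
    calc k * q * ℓ = (k * ℓ) * q := by ring
      _ = _ := by rw [hj]; ring
  have hqe : q * e ≤ 2 * M * e := Nat.mul_le_mul_right _ hq2
  have hrM : r * M + 2 * e * M = ℓ * M + M := by rw [← add_mul, ← hr]; ring
  -- both bounds on `(j + 1) * q` are `ℓ * M` up to less than `ℓ`, and so is `k * q * ℓ`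
  rcases lt_trichotomy M (k * q) with h1 | h1 | h1
  · exfalso
    have : (M + 1) * ℓ ≤ k * q * ℓ := Nat.mul_le_mul_right _ h1
    have h3 : (ℓ + 1) * M = ℓ * M + M := by ring
    have h4 : (M + 1) * ℓ = ℓ * M + ℓ := by ring
    omega
  · exact h1
  · exfalso
    have : (k * q + 1) * ℓ ≤ M * ℓ := Nat.mul_le_mul_right _ h1
    have h3 : (k * q + 1) * ℓ = k * q * ℓ + ℓ := by ring
    have h4 : M * ℓ = ℓ * M := by ring
    have h5 : 2 * M * e = 2 * e * M := by ring
    omega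

/-- A bilipschitz bijection forces `k` to divide a power of the branching of the target. The case of a
negative drift reduces to the other one by reflecting the target. -/
theorem Bil.dvd_pow (h : Bil C f) {k : ℕ} (hk : 1 ≤ k)
    (hB : 2 ≤ Fintype.card B) (hAB : Fintype.card A = Fintype.card B ^ k) :
    ∃ e : ℕ, k ∣ Fintype.card B ^ e := by
  rcases le_total 0 (vel f) with hv | hv
  · exact h.dvd_pow_card hk hv hB hAB
  · exact h.flip.dvd_pow_card hk ((by linarith : 0 ≤ -vel f).trans h.vel_flip) hB hAB

end final
end LampQI

/-! ### Comparison with the word metric -/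

namespace LampQI

section lamp
variable {F : Type} [Group F]

/-- The lamplighter group as a set of points. The cursor is minus the `ℤ`-coordinate, because the action
shifts configurations by `i ↦ i + k`. -/
def toPt : Lamp F ≃ Pt F where
  toFun g := ⟨g.left.val, g.left.property, -Multiplicative.toAdd g.right⟩
  invFun p := ⟨⟨p.cfg, p.fin⟩, Multiplicative.ofAdd (-p.pos)⟩
  left_inv g := by
    apply SemidirectProduct.ext
    · rfl
    · simp
  right_inv p := by
    ext i
    · rfl
    · simp

lemma toPt_mul_cfg (g x : Lamp F) (i : ℤ) :
    (toPt (g * x)).cfg i = (toPt g).cfg i * (toPt x).cfg (i - (toPt g).pos) := by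
  change _ = _ * x.left.val (i - -Multiplicative.toAdd g.right)
  rw [sub_neg_eq_add]
  rfl

lemma toPt_mul_pos (g x : Lamp F) : (toPt (g * x)).pos = (toPt g).pos + (toPt x).pos := by
  change -Multiplicative.toAdd (g.right * x.right) = _
  rw [toAdd_mul, neg_add]
  rfl

/-- Right multiplication by a fixed element moves every point by a bounded amount. -/
lemma exists_near_mul (x : Lamp F) : ∃ r : ℤ, 0 ≤ r ∧ ∀ g, Near r (toPt g) (toPt (g * x)) := by
  obtain ⟨N, hN⟩ := (toPt x).fin.isBounded.exists_norm_le
  obtain ⟨M, hM⟩ := exists_nat_ge (max N |((toPt x).pos : ℝ)|)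
  have hM2 : |(toPt x).pos| ≤ M := by
    have := (le_max_right _ _).trans hM
    exact_mod_cast this
  rw [abs_le] at hM2
  refine ⟨2 * M + 1, by positivity, fun g => ⟨(toPt g).pos - M, by omega, by omega, ?_, ?_, ?_⟩⟩
  · rw [toPt_mul_pos]; omega
  · rw [toPt_mul_pos]; omega
  · intro i hi
    rw [toPt_mul_cfg]
    have : (toPt x).cfg (i - (toPt g).pos) = 1 := by
      by_contra hne
      have h1 := (hN _ (Function.mem_mulSupport.mpr hne)).trans ((le_max_left _ _).trans hM)
      rw [Int.norm_eq_abs] at h1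
      have h2 : |i - (toPt g).pos| ≤ M := by exact_mod_cast h1
      rw [abs_le] at h2
      omega
    rw [this, mul_one]

/-- Left translations preserve the relation `Near`. -/
lemma near_mul_left {r : ℤ} {g x y : Lamp F} (h : Near r (toPt (g * x)) (toPt (g * y))) :
    Near r (toPt x) (toPt y) := by
  obtain ⟨lo, h1, h2, h3, h4, h5⟩ := h
  rw [toPt_mul_pos] at h1 h2 h3 h4
  refine ⟨lo - (toPt g).pos, by omega, by omega, by omega, by omega, fun i hi => ?_⟩
  have := h5 (i + (toPt g).pos) (by omega)
  rw [toPt_mul_cfg, toPt_mul_cfg, add_sub_cancel_right] at this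
  exact mul_left_cancel this

lemma wordDist_spec {S : Set (Lamp F)} (hS : Subgroup.closure S = ⊤) (g h : Lamp F) :
    ∃ l : List (Lamp F), l.length = wordDist S g h ∧ (∀ x ∈ l, x ∈ S ∨ x⁻¹ ∈ S) ∧
      g⁻¹ * h = l.prod := by
  have hmem : g⁻¹ * h ∈ Subgroup.closure S := by rw [hS]; trivial
  rw [← Subgroup.mem_toSubmonoid, Subgroup.closure_toSubmonoid] at hmem
  obtain ⟨l, hl, hp⟩ := Submonoid.exists_list_of_mem_closure hmem
  exact Nat.sInf_mem (s := {m : ℕ | ∃ l : List (Lamp F), l.length = m ∧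
    (∀ x ∈ l, x ∈ S ∨ x⁻¹ ∈ S) ∧ g⁻¹ * h = l.prod}) ⟨l.length, l, rfl, hl, hp.symm⟩

/-- The relation `Near` is bounded by the word metric. -/
lemma near_of_wordDist {S : Set (Lamp F)} (hfin : S.Finite) (hS : Subgroup.closure S = ⊤) :
    ∃ r : ℤ, 0 ≤ r ∧ ∀ g h, Near (r * wordDist S g h) (toPt g) (toPt h) := by
  choose ρ hρ0 hρ using exists_near_mul (F := F)
  obtain ⟨r1, hr1⟩ := (hfin.image ρ).bddAbove
  obtain ⟨r2, hr2⟩ := (hfin.image fun x => ρ x⁻¹).bddAbove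
  set r := max 0 (max r1 r2) with hr
  have hgen : ∀ x, (x ∈ S ∨ x⁻¹ ∈ S) → ∀ g, Near r (toPt g) (toPt (g * x)) := by
    intro x hx g
    refine (hρ x g).mono ?_
    rcases hx with hx | hx
    · have := hr1 ⟨x, hx, rfl⟩
      omega
    · have := hr2 ⟨x⁻¹, hx, rfl⟩
      simp only [inv_inv] at this
      omega
  refine ⟨r, by omega, fun g h => ?_⟩
  obtain ⟨l, hlen, hl, hp⟩ := wordDist_spec hS g h
  rw [← hlen, show h = g * l.prod by rw [← hp]; group]
  clear hlen hp
  induction l generalizing g with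
  | nil => simpa using Near.refl _
  | cons x l ih =>
    have h1 := hgen x (hl x (by simp)) g
    have h2 := ih (g * x) (fun y hy => hl y (by simp [hy]))
    rw [List.prod_cons, ← mul_assoc]
    refine (h1.trans h2).mono ?_
    rw [List.length_cons]; push_cast; ring_nf; rfl

/-- Conversely, `Near 1` bounds the word metric, as the lamp group is finite. -/
lemma wordDist_of_near [Fintype F] (S : Set (Lamp F)) :
    ∃ D : ℕ, ∀ g h, Near 1 (toPt g) (toPt h) → wordDist S g h ≤ D := by
  have hfin : {x : Lamp F | Near 1 (toPt 1) (toPt x)}.Finite := by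
    refine Set.Finite.subset (((stack (toPt (1 : Lamp F)) (-1) 2
      (Finset.Icc (-1) 1)).finite_toSet).preimage toPt.injective.injOn) ?_
    intro x hx
    obtain ⟨lo, h1, h2, h3, h4, h5⟩ := hx
    have h0 : (toPt (1 : Lamp F)).pos = 0 := rfl
    rw [h0] at h1 h2
    rw [Set.mem_preimage, Finset.mem_coe, mem_stack, Finset.mem_Icc]
    exact ⟨⟨by omega, by omega⟩, (h5.mono (by omega) (by push_cast; omega)).symm⟩
  obtain ⟨D, hD⟩ := (hfin.image fun x => wordDist S 1 x).bddAbove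
  refine ⟨D, fun g h hgh => ?_⟩
  have e : wordDist S g h = wordDist S 1 (g⁻¹ * h) := by
    unfold wordDist; simp
  rw [e]
  refine hD ⟨g⁻¹ * h, ?_, rfl⟩
  apply near_mul_left (g := g)
  simpa using hgh

variable {G : Type} [Group G] [Fintype G]

/-- A coarsely Lipschitz map for the word metrics is Lipschitz in the model. -/
lemma lip_of_wordDist {SG : Set (Lamp G)} {SF : Set (Lamp F)} (hfin : SF.Finite)
    (hSF : Subgroup.closure SF = ⊤) {φ : Lamp G → Lamp F} {α β : ℝ} (hα : 0 ≤ α)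
    (h : ∀ x y, (wordDist SF (φ x) (φ y) : ℝ) ≤ α * wordDist SG x y + β) :
    ∃ C : ℤ, Lip C (fun p => toPt (φ (toPt.symm p))) := by
  obtain ⟨r, hr0, hr⟩ := near_of_wordDist hfin hSF
  obtain ⟨D, hD⟩ := wordDist_of_near SG
  obtain ⟨M, hM⟩ := exists_nat_ge (α * D + β)
  refine ⟨r * M, fun p q hpq => (hr _ _).mono ?_⟩
  have h1 := hD (toPt.symm p) (toPt.symm q) (by simpa using hpq)
  have h2 : (wordDist SF (φ (toPt.symm p)) (φ (toPt.symm q)) : ℝ) ≤ M := by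
    refine (h _ _).trans (le_trans ?_ hM)
    have : (wordDist SG (toPt.symm p) (toPt.symm q) : ℝ) ≤ D := by exact_mod_cast h1
    gcongr
  have h3 : wordDist SF (φ (toPt.symm p)) (φ (toPt.symm q)) ≤ M := by exact_mod_cast h2
  gcongr

end lamp
end LampQI

open LampQI in
/-- Main Theorem: Let `F`, `G` be finite groups with `|F| = n` and
`|G| = n^k`, `k > 1`, such that `k` is not a product of primes dividing `n`.
Then there is no bijective quasi-isometry between the lamplighter groups
`G ≀ ℤ` and `F ≀ ℤ` (with word metrics from any finite generating sets). -/
theorem stmt_17 (n k : ℕ) (hn : 2 ≤ n) (hk : 1 < k)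
    (hkp : ∃ p : ℕ, p.Prime ∧ p ∣ k ∧ ¬ p ∣ n)
    (F G : Type) [Group F] [Finite F] [Group G] [Finite G]
    (hF : Nat.card F = n) (hG : Nat.card G = n ^ k)
    (SG : Set (Lamp G)) (hSGfin : SG.Finite) (hSGgen : Subgroup.closure SG = ⊤)
    (SF : Set (Lamp F)) (hSFfin : SF.Finite) (hSFgen : Subgroup.closure SF = ⊤) :
    ¬ ∃ (f : Lamp G → Lamp F) (K C : ℝ), 1 ≤ K ∧ 0 ≤ C ∧
        Function.Bijective f ∧
        ∀ x y : Lamp G,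
          (1 / K) * (wordDist SG x y : ℝ) - C ≤ (wordDist SF (f x) (f y) : ℝ) ∧
          (wordDist SF (f x) (f y) : ℝ) ≤ K * (wordDist SG x y : ℝ) + C := by
  rintro ⟨f, K, C, hK, hC, hf, hqi⟩
  have := Fintype.ofFinite F
  have := Fintype.ofFinite G
  rw [Nat.card_eq_fintype_card] at hF hG
  set e := Equiv.ofBijective f hf with he
  have hef : ∀ y, f (e.symm y) = y := fun y => e.apply_symm_apply y
  obtain ⟨C1, hC1⟩ := lip_of_wordDist hSFfin hSFgen (α := K) (by linarith) fun x y => (hqi x y).2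
  obtain ⟨C2, hC2⟩ := lip_of_wordDist (φ := e.symm) (SG := SF) hSGfin hSGgen (α := K) (β := K * C)
    (by linarith) fun x y => by
      have h1 := (hqi (e.symm x) (e.symm y)).1
      rw [hef, hef, sub_le_iff_le_add, one_div_mul_eq_div, div_le_iff₀ (by linarith)] at h1
      linarith
  have hb : Bil (max 1 (max C1 C2)) ((toPt.symm.trans e).trans toPt) :=
    ⟨le_max_left _ _, fun p q h => (hC1 p q h).mono (by simp),
      fun p q h => (hC2 p q h).mono (by simp)⟩
  obtain ⟨j, hj⟩ := hb.dvd_pow (k := k) hk.le (by rw [hF]; exact hn) (by rw [hF, hG])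
  obtain ⟨p, hp, hpk, hpn⟩ := hkp
  rw [hF] at hj
  exact hpn (hp.dvd_of_dvd_pow (hpk.trans hj))
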